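/- arXiv:1808.07892 — 2 statements merged into one kernel-verified Lean document; each statement's English description precedes it below -/
import Mathlib

section
/- Let ε ∈ (0,1], k ∈ {0,1}, ε_k = (k+ε)/2, and let p be a strictly pseudoconvex boundary point of class C^{k+2,ε} of a domain Ω in ℂⁿ. Then there exist a neighborhood U of p, an injective holomorphic map Φ : U → ℂⁿ with Φ(p) = 0, and a constant C > 0, such that every point ζ = (ζ₁, ζ') ∈ ℂ × ℂ^{n−1} of Φ(∂Ω ∩ U) satisfies | Re ζ₁ − |ζ'|² | ≤ C·( |ζ'|^{2+2ε_k} + |Im ζ₁|^{2+2ε_k} ); that is, ∂Ω is approximated near p, to order 2 + 2ε_k, by a biholomorphic image of a sphere. -/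
open Metric MeasureTheory Set
open scoped NNReal ENNReal

noncomputable section

/-- Complex Euclidean `n`-space. -/
abbrev Cn (n : ℕ) := EuclideanSpace ℂ (Fin n)

variable {n : ℕ}

instance : MeasurableSpace (Cn n) := borel _
instance : BorelSpace (Cn n) := ⟨rfl⟩
instance : InnerProductSpace ℝ (Cn n) := InnerProductSpace.rclikeToReal ℂ _

/-- `δ_Ω(z)`: the Euclidean distance from `z` to the boundary of `Ω`. -/
def bdist (Ω : Set (Cn n)) (z : Cn n) : ℝ := Metric.infDist z (frontier Ω)

/-- The squeezing function `σ_Ω(z)` of a (bounded) domain `Ω`. -/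
def squeezing (Ω : Set (Cn n)) (z : Cn n) : ℝ :=
  sSup {r : ℝ | 0 < r ∧ ∃ f : Cn n → Cn n,
    DifferentiableOn ℂ f Ω ∧ Set.InjOn f Ω ∧ Set.MapsTo f Ω (Metric.ball 0 1) ∧
    f z = 0 ∧ Metric.ball (0 : Cn n) r ⊆ f '' Ω}

/-- The Kobayashi metric `κ_Ω(z;X)`. -/
def kobayashi (Ω : Set (Cn n)) (z X : Cn n) : ℝ :=
  sInf {r : ℝ | ∃ (α : ℂ) (φ : ℂ → Cn n),
    DifferentiableOn ℂ φ (Metric.ball 0 1) ∧ Set.MapsTo φ (Metric.ball 0 1) Ω ∧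
    φ 0 = z ∧ α • deriv φ 0 = X ∧ r = ‖α‖}

/-- The Carathéodory metric `γ_Ω(z;X)`. -/
def caratheodory (Ω : Set (Cn n)) (z X : Cn n) : ℝ :=
  sSup {r : ℝ | ∃ f : Cn n → ℂ,
    DifferentiableOn ℂ f Ω ∧ Set.MapsTo f Ω (Metric.ball 0 1) ∧
    r = ‖fderiv ℂ f z X‖}

/-- `⟨∂ρ(q),X⟩ = Σ_j (∂ρ/∂z_j)(q) X_j`, expressed via the real differential:
`⟨∂ρ(q),X⟩ = (Dρ(q)X - i·Dρ(q)(iX))/2`. -/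
def cderiv (ρ : Cn n → ℝ) (q X : Cn n) : ℂ :=
  (((fderiv ℝ ρ q X : ℝ) : ℂ) - Complex.I * ((fderiv ℝ ρ q (Complex.I • X) : ℝ) : ℂ)) / 2

/-- The Levi form `L_ρ(q;X) = Σ_{j,k} (∂²ρ/∂z_j∂z̄_k)(q) X_j X̄_k`, expressed via the real
second differential: `L_ρ(q;X) = (D²ρ(q)[X,X] + D²ρ(q)[iX,iX])/4`. -/
def leviForm (ρ : Cn n → ℝ) (q X : Cn n) : ℝ :=
  (fderiv ℝ (fun w => fderiv ℝ ρ w X) q X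
    + fderiv ℝ (fun w => fderiv ℝ ρ w (Complex.I • X)) q (Complex.I • X)) / 4

/-- `p` is a strictly pseudoconvex boundary point of `Ω` of class `C^{m,ε}`. -/
def IsStrictPscPtHolder (Ω : Set (Cn n)) (p : Cn n) (m : ℕ) (ε : ℝ) : Prop :=
  p ∈ frontier Ω ∧ ∃ W : Set (Cn n), IsOpen W ∧ p ∈ W ∧ ∃ ρ : Cn n → ℝ,
    ContDiffOn ℝ m ρ W ∧
    (∃ C : ℝ≥0, HolderOnWith C ε.toNNReal (iteratedFDeriv ℝ m ρ) W) ∧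
    Ω ∩ W = {z ∈ W | ρ z < 0} ∧
    (∀ q ∈ frontier Ω ∩ W, fderiv ℝ ρ q ≠ 0) ∧
    (∀ q ∈ frontier Ω ∩ W, ∀ X : Cn n, X ≠ 0 → cderiv ρ q X = 0 → 0 < leviForm ρ q X)

/-- `p` is a strictly pseudoconvex boundary point of `Ω` of class `C²`. -/
def IsStrictPscPtC2 (Ω : Set (Cn n)) (p : Cn n) : Prop :=
  p ∈ frontier Ω ∧ ∃ W : Set (Cn n), IsOpen W ∧ p ∈ W ∧ ∃ ρ : Cn n → ℝ,
    ContDiffOn ℝ 2 ρ W ∧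
    Ω ∩ W = {z ∈ W | ρ z < 0} ∧
    (∀ q ∈ frontier Ω ∩ W, fderiv ℝ ρ q ≠ 0) ∧
    (∀ q ∈ frontier Ω ∩ W, ∀ X : Cn n, X ≠ 0 → cderiv ρ q X = 0 → 0 < leviForm ρ q X)

/-- An open set `D ⊆ ℂⁿ` is pseudoconvex: `u = -log dist(·, Dᶜ)` is plurisubharmonic on `D`. -/
def IsPseudoconvex (D : Set (Cn n)) : Prop :=
  IsOpen D ∧
  UpperSemicontinuousOn (fun z => -Real.log (Metric.infDist z Dᶜ)) D ∧
  ∀ a ∈ D, ∀ w : Cn n, ∀ r : ℝ, 0 < r →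
    (∀ l : ℂ, ‖l‖ ≤ r → a + l • w ∈ D) →
    -Real.log (Metric.infDist a Dᶜ) ≤
      (1 / (2 * Real.pi)) * ∫ θ in (0:ℝ)..(2 * Real.pi),
        -Real.log (Metric.infDist (a + ((r : ℂ) * Complex.exp (θ * Complex.I)) • w) Dᶜ)

/-- `cl(Ω)` admits a Stein neighborhood basis. -/
def HasSteinBasis (Ω : Set (Cn n)) : Prop :=
  ∀ W : Set (Cn n), IsOpen W → closure Ω ⊆ W →
    ∃ U : Set (Cn n), IsPseudoconvex U ∧ closure Ω ⊆ U ∧ U ⊆ W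

/-- The squared `L²`-norm of `f` on `D` (as an extended nonnegative real). -/
def L2normSq (D : Set (Cn n)) (f : Cn n → ℂ) : ℝ≥0∞ := ∫⁻ w in D, (‖f w‖₊ : ℝ≥0∞) ^ 2

/-- `J⁰_D(z) = sup {|f(z)|² : f ∈ L²_h(D), ‖f‖_D ≤ 1}`; equals the Bergman kernel on the
diagonal. -/
def J0 (D : Set (Cn n)) (z : Cn n) : ℝ :=
  sSup {v : ℝ | ∃ f : Cn n → ℂ, DifferentiableOn ℂ f D ∧ L2normSq D f ≤ 1 ∧ v = ‖f z‖ ^ 2}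

/-- `J¹_D(z;X) = sup {|f'(z)X|² : f ∈ L²_h(D), ‖f‖_D ≤ 1, f(z) = 0}`. -/
def J1 (D : Set (Cn n)) (z X : Cn n) : ℝ :=
  sSup {v : ℝ | ∃ f : Cn n → ℂ, DifferentiableOn ℂ f D ∧ L2normSq D f ≤ 1 ∧ f z = 0 ∧
    v = ‖fderiv ℂ f z X‖ ^ 2}

/-- `J²_D(z;X,Y) = sup {|Σ_{j,k} f_{ζ_jζ_k}(z) X_j Y_k|² : f ∈ L²_h(D), ‖f‖_D ≤ 1,
f(z) = 0, f'(z) = 0}`. -/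
def J2 (D : Set (Cn n)) (z X Y : Cn n) : ℝ :=
  sSup {v : ℝ | ∃ f : Cn n → ℂ, DifferentiableOn ℂ f D ∧ L2normSq D f ≤ 1 ∧ f z = 0 ∧
    fderiv ℂ f z = 0 ∧ v = ‖fderiv ℂ (fun w => fderiv ℂ f w Y) z X‖ ^ 2}

/-- The Bergman metric `β_D(z;X) = (J¹_D(z;X)/J⁰_D(z))^{1/2}`. -/
def bergman (D : Set (Cn n)) (z X : Cn n) : ℝ := Real.sqrt (J1 D z X / J0 D z)

/-- The bisectional curvature of the Bergman metric. -/
def bisect (D : Set (Cn n)) (z X Y : Cn n) : ℝ :=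
  2 - J0 D z * J2 D z X Y / (J1 D z X * J1 D z Y)

/-- The holomorphic sectional curvature `s_D(z;X)` of the Bergman metric. -/
def sectCurv (D : Set (Cn n)) (z X : Cn n) : ℝ := bisect D z X X

/-- The Ricci curvature `r_D(z;X)` of the Bergman metric (w.r.t. the standard basis). -/
def ricciCurv (D : Set (Cn n)) (z X : Cn n) : ℝ :=
  ∑ j : Fin n, bisect D z (EuclideanSpace.single j 1) X

/-- The scalar curvature `t_D(z)` of the Bergman metric. -/
def scalarCurv (D : Set (Cn n)) (z : Cn n) : ℝ :=
  ∑ j : Fin n, ricciCurv D z (EuclideanSpace.single j 1)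

/-- `M(z;X) = ( |⟨∂δ_Ω(z),X⟩|²/δ_Ω(z)² + L(z;X)/δ_Ω(z) )^{1/2}`, where `L` is the Levi form
of `-δ_Ω`. -/
def Mfun (Ω : Set (Cn n)) (z X : Cn n) : ℝ :=
  Real.sqrt (‖cderiv (bdist Ω) z X‖ ^ 2 / (bdist Ω z) ^ 2
    + leviForm (fun w => -(bdist Ω w)) z X / bdist Ω z)

/-- The sesquilinear form of the Bergman metric, recovered from `β²` by polarization. -/
def bergForm (D : Set (Cn n)) (z X Y : Cn n) : ℂ :=
  (((J1 D z (X + Y) / J0 D z : ℝ) : ℂ) - ((J1 D z (X - Y) / J0 D z : ℝ) : ℂ)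
    + Complex.I * ((J1 D z (X + Complex.I • Y) / J0 D z : ℝ) : ℂ)
    - Complex.I * ((J1 D z (X - Complex.I • Y) / J0 D z : ℝ) : ℂ)) / 4

/-- The Hermitian matrix `(B_{jk}(z))` of the Bergman metric in the standard coordinates. -/
def bergMat (D : Set (Cn n)) (z : Cn n) : Matrix (Fin n) (Fin n) ℂ :=
  fun j k => bergForm D z (EuclideanSpace.single j 1) (EuclideanSpace.single k 1)

/-- The canonical Bergman invariant `J_D(z) = Δ_D(z)/K_D(z)`. -/
def canonInvariant (D : Set (Cn n)) (z : Cn n) : ℂ :=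
  (bergMat D z).det / ((J0 D z : ℝ) : ℂ)

/-! Taylor-expand a defining function to third order at `p` and choose complex linear coordinates
`w = (w₁, w')` in which the boundary reads `Re w₁ = P₂ + P₃ + O(|w|^q)`, with `P₂`, `P₃` real forms
of degree two and three and `q = 2 + 2ε_k`, and in which the Levi form on the complex tangent space
`w₁ = 0` is `|w'|²`. Modulo multiples of `Re w₁`, a real form is a sum of terms
`(i Im w₁)^a × (form in w')`, and since `i Im w₁ ≡ w₁`, these split by bidegree into real parts of
holomorphic polynomials and of terms of type `(2, 1)`; apart from `|w'|²`, the former are absorbed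
by a polynomial change of `w₁`, the latter, which contain a single conjugate `w̄_j`, by a quadratic
change of `w'` through `|w_j + Q_j|² = |w_j|² + 2 Re (Q_j w̄_j) + |Q_j|²`. The multiples of `Re w₁`
are one order better than they look, because `Re w₁ = O(|w|²)` on the boundary. Finally,
`|ζ| = O(|ζ'| + |Im ζ₁|)` on the image, again because `Re ζ₁` is small there. -/

open Asymptotics Filter Topology

section HomogeneousForms

variable {𝕜 E F : Type*} [NontriviallyNormedField 𝕜] [NormedAddCommGroup E] [NormedSpace 𝕜 E]
  [NormedAddCommGroup F] [NormedSpace 𝕜 F]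

variable (𝕜 E) in
/-- The continuous homogeneous forms of degree `d` on `E`: the linear combinations of products of
`d` continuous linear functionals, encoded as functions `E → 𝕜`. They are the terms of the Taylor
expansions and the components of the coordinate changes. -/
def homogeneousForms (d : ℕ) : Submodule 𝕜 (E → 𝕜) :=
  LinearMap.range (LinearMap.ltoFun 𝕜 E 𝕜 𝕜 ∘ₗ ContinuousLinearMap.coeLM 𝕜) ^ d

theorem const_mem_homogeneousForms (c : 𝕜) : (fun _ ↦ c) ∈ homogeneousForms 𝕜 E 0 :=
  Submodule.mem_one.2 ⟨c, rfl⟩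

theorem mem_homogeneousForms_one {f : E → 𝕜} :
    f ∈ homogeneousForms 𝕜 E 1 ↔ ∃ X : E →L[𝕜] 𝕜, ⇑X = f := by
  rw [homogeneousForms, pow_one]
  rfl

theorem clm_mem_homogeneousForms (X : E →L[𝕜] 𝕜) : ⇑X ∈ homogeneousForms 𝕜 E 1 :=
  mem_homogeneousForms_one.2 ⟨X, rfl⟩

theorem mul_mem_homogeneousForms {d e : ℕ} {f g : E → 𝕜} (hf : f ∈ homogeneousForms 𝕜 E d)
    (hg : g ∈ homogeneousForms 𝕜 E e) : f * g ∈ homogeneousForms 𝕜 E (d + e) := by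
  rw [homogeneousForms, pow_add]
  exact Submodule.mul_mem_mul hf hg

theorem clm_mul_mem_homogeneousForms {d : ℕ} (X : E →L[𝕜] 𝕜) {f : E → 𝕜}
    (hf : f ∈ homogeneousForms 𝕜 E d) : ⇑X * f ∈ homogeneousForms 𝕜 E (d + 1) :=
  add_comm d 1 ▸ mul_mem_homogeneousForms (clm_mem_homogeneousForms X) hf

@[elab_as_elim]
theorem homogeneousForms_induction
    {motive : ∀ (d : ℕ) (f : E → 𝕜), f ∈ homogeneousForms 𝕜 E d → Prop}
    (const : ∀ c, motive 0 (fun _ ↦ c) (const_mem_homogeneousForms c))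
    (add : ∀ d f g hf hg, motive d f hf → motive d g hg → motive d (f + g) (add_mem hf hg))
    (clm_mul : ∀ d (X : E →L[𝕜] 𝕜) f hf, motive d f hf →
      motive (d + 1) (⇑X * f) (clm_mul_mem_homogeneousForms X hf))
    {d : ℕ} {f : E → 𝕜} (hf : f ∈ homogeneousForms 𝕜 E d) : motive d f hf := by
  refine Submodule.pow_induction_on_left' _ (C := motive) const
    (fun f g d hf hg ↦ add d f g hf hg) ?_ hf
  rintro _ ⟨X, rfl⟩ d f hf
  exact clm_mul d X f hf

@[elab_as_elim]
theorem homogeneousForms_succ_induction {d : ℕ}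
    {motive : ∀ f : E → 𝕜, f ∈ homogeneousForms 𝕜 E (d + 1) → Prop}
    (clm_mul : ∀ (X : E →L[𝕜] 𝕜) f hf, motive (⇑X * f) (clm_mul_mem_homogeneousForms X hf))
    (add : ∀ f g hf hg, motive f hf → motive g hg → motive (f + g) (add_mem hf hg))
    {f : E → 𝕜} (hf : f ∈ homogeneousForms 𝕜 E (d + 1)) : motive f hf := by
  have hf' := hf
  rw [homogeneousForms, pow_succ'] at hf'
  suffices ∃ h, motive f h from this.2
  refine Submodule.mul_induction_on hf' ?_ fun f g ⟨hf, hf'⟩ ⟨hg, hg'⟩ ↦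
    ⟨_, add f g hf hg hf' hg'⟩
  rintro _ ⟨X, rfl⟩ f hf
  exact ⟨_, clm_mul X f hf⟩

theorem map_smul_of_mem_homogeneousForms {d : ℕ} {f : E → 𝕜} (hf : f ∈ homogeneousForms 𝕜 E d)
    (c : 𝕜) (x : E) : f (c • x) = c ^ d * f x := by
  induction hf using homogeneousForms_induction with
  | const a => simp
  | add _ f g _ _ hf hg => simp only [Pi.add_apply, hf, hg, mul_add]
  | clm_mul _ X f _ hf =>
    simp only [Pi.mul_apply, map_smul, hf, smul_eq_mul]
    ring

theorem comp_clm_mem_homogeneousForms {d : ℕ} {f : F → 𝕜} (hf : f ∈ homogeneousForms 𝕜 F d)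
    (A : E →L[𝕜] F) : f ∘ A ∈ homogeneousForms 𝕜 E d := by
  induction hf using homogeneousForms_induction with
  | const c => exact const_mem_homogeneousForms c
  | add d f g _ _ hf hg => exact add_mem hf hg
  | clm_mul d X f _ hf => exact clm_mul_mem_homogeneousForms (X.comp A) hf

theorem contDiff_of_mem_homogeneousForms {d : ℕ} {f : E → 𝕜} (hf : f ∈ homogeneousForms 𝕜 E d)
    {m : WithTop ℕ∞} : ContDiff 𝕜 m f := by
  induction hf using homogeneousForms_induction with
  | const c => exact contDiff_const
  | add _ f g _ _ hf hg => exact hf.add hg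
  | clm_mul _ X f _ hf => exact X.contDiff.mul hf

theorem isBigO_of_mem_homogeneousForms {d : ℕ} {f : E → 𝕜} (hf : f ∈ homogeneousForms 𝕜 E d)
    (l : Filter E) : f =O[l] fun x ↦ ‖x‖ ^ d := by
  induction hf using homogeneousForms_induction with
  | const c => simpa using isBigO_const_const c (one_ne_zero (α := ℝ)) l
  | add d f g _ _ hf hg => exact hf.add hg
  | clm_mul d X f _ hf =>
    simp only [pow_succ']
    exact (X.isBigO_id l).norm_right.mul hf

theorem exists_eq_comp_add_mul_of_mem_homogeneousForms {d : ℕ} {f : E → 𝕜}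
    (hf : f ∈ homogeneousForms 𝕜 E (d + 1)) (L : E →L[𝕜] 𝕜) (e : E) :
    ∃ g ∈ homogeneousForms 𝕜 E d, ∀ x, f x = f (x - L x • e) + L x * g x := by
  induction d generalizing f with
  | zero =>
    obtain ⟨X, rfl⟩ := mem_homogeneousForms_one.1 hf
    exact ⟨_, const_mem_homogeneousForms (X e), fun x ↦ by simp⟩
  | succ d ih =>
    induction hf using homogeneousForms_succ_induction with
    | clm_mul X f hf =>
      obtain ⟨g, hg, h⟩ := ih hf
      let X' : E →L[𝕜] 𝕜 := X - (X e) • L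
      refine ⟨⇑X' * g + X e • f, add_mem (clm_mul_mem_homogeneousForms X' hg)
        (Submodule.smul_mem _ _ hf), fun x ↦ ?_⟩
      simp only [Pi.mul_apply, Pi.add_apply, Pi.smul_apply, X', map_sub, map_smul, smul_eq_mul,
        FunLike.coe_sub, FunLike.coe_smul, Pi.sub_apply]
      linear_combination (X x - L x * X e) * h x
    | add f₁ f₂ _ _ h₁ h₂ =>
      obtain ⟨g₁, hg₁, h₁⟩ := h₁
      obtain ⟨g₂, hg₂, h₂⟩ := h₂
      refine ⟨g₁ + g₂, add_mem hg₁ hg₂, fun x ↦ ?_⟩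
      simp only [Pi.add_apply]
      linear_combination h₁ x + h₂ x

theorem exists_eq_mul_of_mem_homogeneousForms {d : ℕ} {f : E → 𝕜}
    (hf : f ∈ homogeneousForms 𝕜 E (d + 1)) {L : E →L[𝕜] 𝕜} {e : E} (he : L e = 1)
    (hker : ∀ x, L x = 0 → f x = 0) : ∃ g ∈ homogeneousForms 𝕜 E d, f = ⇑L * g := by
  obtain ⟨g, hg, h⟩ := exists_eq_comp_add_mul_of_mem_homogeneousForms hf L e
  refine ⟨g, hg, funext fun x ↦ ?_⟩
  rw [h, hker _ (by simp [he]), zero_add, Pi.mul_apply]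

theorem diagonal_mem_homogeneousForms [CompleteSpace 𝕜] [FiniteDimensional 𝕜 E] {d : ℕ}
    (T : E [×d]→L[𝕜] 𝕜) : (fun x ↦ T fun _ ↦ x) ∈ homogeneousForms 𝕜 E d := by
  induction d with
  | zero => simpa only [Subsingleton.elim _ (0 : Fin 0 → E)] using const_mem_homogeneousForms (T 0)
  | succ d ih =>
    let b := Module.finBasis 𝕜 E
    have expand : (fun x ↦ T fun _ ↦ x) = ∑ i, ⇑(b.coord i).toContinuousLinearMap *
        fun x ↦ T.curryLeft (b i) fun _ ↦ x := by
      funext x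
      calc T (fun _ ↦ x) = T.curryLeft x (fun _ ↦ x) :=
            congrArg T (funext fun i ↦ by cases i using Fin.cases <;> rfl)
        _ = T.curryLeft (∑ i, b.repr x i • b i) (fun _ ↦ x) := by rw [b.sum_repr]
        _ = _ := by
          simp only [map_sum, map_smul, _root_.sum_apply, Finset.sum_apply]
          rfl
    rw [expand]
    exact sum_mem fun i _ ↦ clm_mul_mem_homogeneousForms _ (ih (T.curryLeft (b i)))

end HomogeneousForms

section RealPart

variable {E : Type*} [NormedAddCommGroup E] [NormedSpace ℂ E] [NormedSpace ℝ E]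
  [IsScalarTower ℝ ℂ E]

theorem re_clm_mul_mem_homogeneousForms (X : E →L[ℂ] ℂ) {d : ℕ} {f : E → ℂ}
    (hre : (fun x ↦ (f x).re) ∈ homogeneousForms ℝ E d)
    (him : (fun x ↦ (f x).im) ∈ homogeneousForms ℝ E d) :
    (fun x ↦ (X x * f x).re) ∈ homogeneousForms ℝ E (d + 1) :=
  sub_mem (clm_mul_mem_homogeneousForms (Complex.reCLM ∘L X.restrictScalars ℝ) hre)
    (clm_mul_mem_homogeneousForms (Complex.imCLM ∘L X.restrictScalars ℝ) him)

theorem im_clm_mul_mem_homogeneousForms (X : E →L[ℂ] ℂ) {d : ℕ} {f : E → ℂ}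
    (hre : (fun x ↦ (f x).re) ∈ homogeneousForms ℝ E d)
    (him : (fun x ↦ (f x).im) ∈ homogeneousForms ℝ E d) :
    (fun x ↦ (X x * f x).im) ∈ homogeneousForms ℝ E (d + 1) :=
  add_mem (clm_mul_mem_homogeneousForms (Complex.reCLM ∘L X.restrictScalars ℝ) him)
    (clm_mul_mem_homogeneousForms (Complex.imCLM ∘L X.restrictScalars ℝ) hre)

theorem re_im_mem_homogeneousForms {d : ℕ} {f : E → ℂ} (hf : f ∈ homogeneousForms ℂ E d) :
    (fun x ↦ (f x).re) ∈ homogeneousForms ℝ E d ∧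
      (fun x ↦ (f x).im) ∈ homogeneousForms ℝ E d := by
  induction hf using homogeneousForms_induction with
  | const c => exact ⟨const_mem_homogeneousForms c.re, const_mem_homogeneousForms c.im⟩
  | add d f g _ _ hf hg => exact ⟨add_mem hf.1 hg.1, add_mem hf.2 hg.2⟩
  | clm_mul d X f _ hf =>
    exact ⟨re_clm_mul_mem_homogeneousForms X hf.1 hf.2,
      im_clm_mul_mem_homogeneousForms X hf.1 hf.2⟩

theorem re_mul_conj_clm_mem_homogeneousForms {d : ℕ} {f : E → ℂ}
    (hf : f ∈ homogeneousForms ℂ E d) (X : E →L[ℂ] ℂ) :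
    (fun x ↦ (f x * starRingEnd ℂ (X x)).re) ∈ homogeneousForms ℝ E (d + 1) := by
  obtain ⟨hre, him⟩ := re_im_mem_homogeneousForms hf
  convert add_mem (clm_mul_mem_homogeneousForms (Complex.reCLM ∘L X.restrictScalars ℝ) hre)
    (clm_mul_mem_homogeneousForms (Complex.imCLM ∘L X.restrictScalars ℝ) him) using 1
  funext x
  simp
  ring

end RealPart

section Bidegree

theorem exists_clm_re_eq {E : Type*} [NormedAddCommGroup E] [NormedSpace ℂ E] [NormedSpace ℝ E]
    [IsScalarTower ℝ ℂ E] (X : E →L[ℝ] ℝ) : ∃ X' : E →L[ℂ] ℂ, ∀ w, X w = (X' w).re :=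
  ⟨StrongDual.extendRCLike X, fun w ↦ by simp [← RCLike.re_eq_complex_re]⟩

variable {ι : Type*} [Fintype ι]

variable (ι) in
/-- The real-valued forms on `ℂ^ι` whose components have bidegree `(d + 1, 0)`, `(d, 1)` or the
conjugate of one of these. For `d ≤ 2` they are all the real forms of degree `d + 1`. -/
def nearlyHolomorphicForms (d : ℕ) : Submodule ℝ (EuclideanSpace ℂ ι → ℝ) where
  carrier := {f | ∃ F ∈ homogeneousForms ℂ (EuclideanSpace ℂ ι) (d + 1),
    ∃ G : ι → EuclideanSpace ℂ ι → ℂ, (∀ j, G j ∈ homogeneousForms ℂ (EuclideanSpace ℂ ι) d) ∧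
      ∀ w, f w = (F w).re + ∑ j, (G j w * starRingEnd ℂ (w j)).re}
  zero_mem' := ⟨0, zero_mem _, 0, fun _ ↦ zero_mem _, by simp⟩
  add_mem' := by
    rintro f f' ⟨F, hF, G, hG, hf⟩ ⟨F', hF', G', hG', hf'⟩
    refine ⟨F + F', add_mem hF hF', G + G', fun j ↦ add_mem (hG j) (hG' j), fun w ↦ ?_⟩
    simp only [Pi.add_apply, hf, hf', add_mul, Complex.add_re, Finset.sum_add_distrib]
    ring
  smul_mem' := by
    rintro c f ⟨F, hF, G, hG, hf⟩
    refine ⟨(c : ℂ) • F, Submodule.smul_mem _ _ hF, fun j ↦ (c : ℂ) • G j,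
      fun j ↦ Submodule.smul_mem _ _ (hG j), fun w ↦ ?_⟩
    simp only [Pi.smul_apply, smul_eq_mul, hf, mul_assoc, Complex.re_ofReal_mul, mul_add,
      Finset.mul_sum]

theorem re_mem_nearlyHolomorphicForms {d : ℕ} {F : EuclideanSpace ℂ ι → ℂ}
    (hF : F ∈ homogeneousForms ℂ (EuclideanSpace ℂ ι) (d + 1)) :
    (fun w ↦ (F w).re) ∈ nearlyHolomorphicForms ι d :=
  ⟨F, hF, 0, fun _ ↦ zero_mem _, by simp⟩

theorem re_mul_conj_mem_nearlyHolomorphicForms {d : ℕ} {G : EuclideanSpace ℂ ι → ℂ}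
    (hG : G ∈ homogeneousForms ℂ (EuclideanSpace ℂ ι) d) (X : EuclideanSpace ℂ ι →L[ℂ] ℂ) :
    (fun w ↦ (G w * starRingEnd ℂ (X w)).re) ∈ nearlyHolomorphicForms ι d := by
  classical
  refine ⟨0, zero_mem _, fun j ↦ starRingEnd ℂ (X (EuclideanSpace.single j 1)) • G,
    fun j ↦ Submodule.smul_mem _ _ hG, fun w ↦ ?_⟩
  have expand : X w = ∑ j, w j * X (EuclideanSpace.single j 1) := by
    conv_lhs => rw [← (EuclideanSpace.basisFun ι ℂ).sum_repr w]
    simp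
  simp only [expand, map_sum, map_mul, Finset.mul_sum, Complex.re_sum, Pi.zero_apply,
    Complex.zero_re, zero_add, Pi.smul_apply, smul_eq_mul]
  exact Finset.sum_congr rfl fun j _ ↦ congrArg Complex.re (by ring)

theorem homogeneousForms_two_le_nearlyHolomorphicForms :
    homogeneousForms ℝ (EuclideanSpace ℂ ι) 2 ≤ nearlyHolomorphicForms ι 1 := by
  intro f hf
  induction hf using homogeneousForms_succ_induction with
  | add f g _ _ hf hg => exact add_mem hf hg
  | clm_mul X g hg =>
    obtain ⟨Y, rfl⟩ := mem_homogeneousForms_one.1 hg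
    obtain ⟨X', hX⟩ := exists_clm_re_eq X
    obtain ⟨Y', hY⟩ := exists_clm_re_eq Y
    convert Submodule.smul_mem _ (1 / 2 : ℝ) (add_mem
      (re_mem_nearlyHolomorphicForms
        (clm_mul_mem_homogeneousForms X' (clm_mem_homogeneousForms Y')))
      (re_mul_conj_mem_nearlyHolomorphicForms (clm_mem_homogeneousForms X') Y')) using 1
    funext w
    simp [hX, hY]
    ring

theorem homogeneousForms_three_le_nearlyHolomorphicForms :
    homogeneousForms ℝ (EuclideanSpace ℂ ι) 3 ≤ nearlyHolomorphicForms ι 2 := by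
  intro f hf
  induction hf using homogeneousForms_succ_induction with
  | add f g _ _ hf hg => exact add_mem hf hg
  | clm_mul X g hg =>
    induction hg using homogeneousForms_succ_induction with
    | add f g _ _ hf hg => rw [mul_add]; exact add_mem hf hg
    | clm_mul Y g hg =>
      obtain ⟨Z, rfl⟩ := mem_homogeneousForms_one.1 hg
      obtain ⟨X', hX⟩ := exists_clm_re_eq X
      obtain ⟨Y', hY⟩ := exists_clm_re_eq Y
      obtain ⟨Z', hZ⟩ := exists_clm_re_eq Z
      have two (U V : EuclideanSpace ℂ ι →L[ℂ] ℂ) :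
          ⇑U * ⇑V ∈ homogeneousForms ℂ (EuclideanSpace ℂ ι) 2 :=
        clm_mul_mem_homogeneousForms U (clm_mem_homogeneousForms V)
      -- `4 Re X Re Y Re Z = Re (X Y Z) + Re (X Y Z̄) + Re (X Z Ȳ) + Re (Y Z X̄)`
      convert Submodule.smul_mem _ (1 / 4 : ℝ) (add_mem (add_mem
        (re_mem_nearlyHolomorphicForms (clm_mul_mem_homogeneousForms X' (two Y' Z')))
        (re_mul_conj_mem_nearlyHolomorphicForms (two X' Y') Z'))
        (add_mem (re_mul_conj_mem_nearlyHolomorphicForms (two X' Z') Y')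
          (re_mul_conj_mem_nearlyHolomorphicForms (two Y' Z') X'))) using 1
      funext w
      simp [hX, hY, hZ]
      ring

end Bidegree

section NormalForm

variable {ι : Type*} [Fintype ι] {i₀ : ι}

theorem exists_eq_re_mul_of_mem_homogeneousForms {d : ℕ} {f : EuclideanSpace ℂ ι → ℝ}
    (hf : f ∈ homogeneousForms ℝ (EuclideanSpace ℂ ι) (d + 1))
    (h : ∀ w : EuclideanSpace ℂ ι, (w i₀).re = 0 → f w = 0) :
    ∃ g ∈ homogeneousForms ℝ (EuclideanSpace ℂ ι) d, ∀ w, f w = (w i₀).re * g w := by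
  classical
  obtain ⟨g, hg, rfl⟩ := exists_eq_mul_of_mem_homogeneousForms
    (L := Complex.reCLM ∘L (EuclideanSpace.proj i₀ : _ →L[ℂ] ℂ).restrictScalars ℝ)
    (e := EuclideanSpace.single i₀ 1) hf (by simp) (by simpa using h)
  exact ⟨g, hg, fun w ↦ by simp⟩

variable [DecidableEq ι]

/-- The quantity `|w'|²`, where `w'` collects the coordinates of `w` other than `w i₀`. -/
def tangentialNormSq (i₀ : ι) (w : EuclideanSpace ℂ ι) : ℝ :=
  ∑ j ∈ Finset.univ.erase i₀, ‖w j‖ ^ 2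

theorem tangentialNormSq_mem_homogeneousForms :
    tangentialNormSq i₀ ∈ homogeneousForms ℝ (EuclideanSpace ℂ ι) 2 := by
  have eq_sum : tangentialNormSq i₀ = ∑ j ∈ Finset.univ.erase i₀,
      fun w : EuclideanSpace ℂ ι ↦ (w j * starRingEnd ℂ (w j)).re := by
    funext w
    simp only [tangentialNormSq, Finset.sum_apply, Complex.mul_conj, Complex.ofReal_re,
      Complex.normSq_eq_norm_sq]
  rw [eq_sum]
  exact sum_mem fun j _ ↦ re_mul_conj_clm_mem_homogeneousForms
    (clm_mem_homogeneousForms (EuclideanSpace.proj j)) (EuclideanSpace.proj j)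

/-- On the hyperplane `conj (w i₀) = - w i₀`, so the term containing `conj (w i₀)` is there the
real part of a holomorphic form. -/
theorem exists_eq_on_hyperplane_of_mem_nearlyHolomorphicForms (i₀ : ι) {d : ℕ}
    {f : EuclideanSpace ℂ ι → ℝ} (hf : f ∈ nearlyHolomorphicForms ι d) :
    ∃ F ∈ homogeneousForms ℂ (EuclideanSpace ℂ ι) (d + 1), ∃ G : ι → EuclideanSpace ℂ ι → ℂ,
      (∀ j, G j ∈ homogeneousForms ℂ (EuclideanSpace ℂ ι) d) ∧ ∀ w, (w i₀).re = 0 →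
        f w = ∑ j ∈ Finset.univ.erase i₀, (G j w * starRingEnd ℂ (w j)).re - (F w).re := by
  obtain ⟨F, hF, G, hG, h⟩ := hf
  refine ⟨⇑(EuclideanSpace.proj (𝕜 := ℂ) i₀) * G i₀ - F,
    sub_mem (clm_mul_mem_homogeneousForms _ (hG i₀)) hF, G, hG, fun w hw ↦ ?_⟩
  have conj_eq : starRingEnd ℂ (w i₀) = -w i₀ := Complex.ext (by simp [hw]) (by simp)
  rw [h, ← Finset.add_sum_erase _ _ (Finset.mem_univ i₀), conj_eq]
  simp
  ring

theorem levi_average_eq_sum {f : EuclideanSpace ℂ ι → ℝ} {F : EuclideanSpace ℂ ι → ℂ}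
    (hF : F ∈ homogeneousForms ℂ (EuclideanSpace ℂ ι) 2) {Y : ι → EuclideanSpace ℂ ι →L[ℂ] ℂ}
    (h : ∀ w, (w i₀).re = 0 →
      f w = ∑ j ∈ Finset.univ.erase i₀, (Y j w * starRingEnd ℂ (w j)).re - (F w).re)
    {v : EuclideanSpace ℂ ι} (hv : v i₀ = 0) : (f v + f (Complex.I • v)) / 2 =
      ∑ j ∈ Finset.univ.erase i₀, (Y j v * starRingEnd ℂ (v j)).re := by
  rw [h v (by simp [hv]), h (Complex.I • v) (by simp [hv]), map_smul_of_mem_homogeneousForms hF]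
  simp

/-- Removing the terms of `f` that mix `w i₀` with the other coordinates costs only real parts of
holomorphic forms. -/
theorem exists_eq_tangentialNormSq_sub_re_on_hyperplane {f : EuclideanSpace ℂ ι → ℝ}
    (hf : f ∈ homogeneousForms ℝ (EuclideanSpace ℂ ι) 2)
    (hlevi : ∀ v : EuclideanSpace ℂ ι, v i₀ = 0 →
      (f v + f (Complex.I • v)) / 2 = tangentialNormSq i₀ v) :
    ∃ F ∈ homogeneousForms ℂ (EuclideanSpace ℂ ι) 2, ∀ w, (w i₀).re = 0 →
      f w = tangentialNormSq i₀ w - (F w).re := by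
  obtain ⟨F, hF, G, hG, h⟩ := exists_eq_on_hyperplane_of_mem_nearlyHolomorphicForms i₀
    (homogeneousForms_two_le_nearlyHolomorphicForms hf)
  choose Y hY using fun j ↦ mem_homogeneousForms_one.1 (hG j)
  simp only [← hY] at h
  let e : EuclideanSpace ℂ ι := EuclideanSpace.single i₀ 1
  let X : EuclideanSpace ℂ ι →L[ℂ] ℂ :=
    ∑ j ∈ Finset.univ.erase i₀, starRingEnd ℂ (Y j e) • EuclideanSpace.proj j
  refine ⟨F + ⇑(EuclideanSpace.proj (𝕜 := ℂ) i₀) * ⇑X,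
    add_mem hF (clm_mul_mem_homogeneousForms _ (clm_mem_homogeneousForms X)), fun w hw ↦ ?_⟩
  let v := w - w i₀ • e
  have hv : v i₀ = 0 := by simp [v, e]
  have hvw : ∀ j ∈ Finset.univ.erase i₀, v j = w j := fun j hj ↦ by
    simp [v, e, Finset.ne_of_mem_erase hj]
  have norm_eq : tangentialNormSq i₀ w =
      ∑ j ∈ Finset.univ.erase i₀, (Y j v * starRingEnd ℂ (w j)).re := by
    calc tangentialNormSq i₀ w = tangentialNormSq i₀ v :=
          Finset.sum_congr rfl fun j hj ↦ by rw [hvw j hj]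
      _ = ∑ j ∈ Finset.univ.erase i₀, (Y j v * starRingEnd ℂ (v j)).re := by
          rw [← hlevi v hv, levi_average_eq_sum hF h hv]
      _ = _ := Finset.sum_congr rfl fun j hj ↦ by rw [hvw j hj]
  have mixed_eq (j : ι) : (Y j w * starRingEnd ℂ (w j)).re =
      (Y j v * starRingEnd ℂ (w j)).re - (w i₀ * (starRingEnd ℂ (Y j e) * w j)).re := by
    simp only [v, map_sub, map_smul, smul_eq_mul, Complex.mul_re, Complex.sub_re, Complex.sub_im,
      Complex.mul_im, Complex.conj_re, Complex.conj_im, hw]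
    ring
  have hX : X w = ∑ j ∈ Finset.univ.erase i₀, starRingEnd ℂ (Y j e) * w j := by simp [X]
  rw [h w hw, norm_eq, Finset.sum_congr rfl fun j _ ↦ mixed_eq j, Finset.sum_sub_distrib,
    Pi.add_apply, Pi.mul_apply, hX, Complex.add_re, EuclideanSpace.coe_proj, Finset.mul_sum,
    Complex.re_sum]
  ring

theorem exists_quadratic_normal_form {f : EuclideanSpace ℂ ι → ℝ}
    (hf : f ∈ homogeneousForms ℝ (EuclideanSpace ℂ ι) 2)
    (hlevi : ∀ v : EuclideanSpace ℂ ι, v i₀ = 0 →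
      (f v + f (Complex.I • v)) / 2 = tangentialNormSq i₀ v) :
    ∃ F ∈ homogeneousForms ℂ (EuclideanSpace ℂ ι) 2,
      ∃ Z ∈ homogeneousForms ℝ (EuclideanSpace ℂ ι) 1,
        ∀ w, f w = tangentialNormSq i₀ w - (F w).re + (w i₀).re * Z w := by
  obtain ⟨F, hF, h⟩ := exists_eq_tangentialNormSq_sub_re_on_hyperplane hf hlevi
  obtain ⟨Z, hZ, hdiv⟩ := exists_eq_re_mul_of_mem_homogeneousForms (i₀ := i₀)
    (add_mem (sub_mem hf (tangentialNormSq_mem_homogeneousForms (i₀ := i₀)))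
      (re_im_mem_homogeneousForms hF).1)
    (fun w hw ↦ by simp [h w hw])
  refine ⟨F, hF, Z, hZ, fun w ↦ ?_⟩
  have := hdiv w
  simp only [Pi.add_apply, Pi.sub_apply] at this
  linarith

theorem exists_cubic_normal_form (i₀ : ι) {f : EuclideanSpace ℂ ι → ℝ}
    (hf : f ∈ homogeneousForms ℝ (EuclideanSpace ℂ ι) 3) :
    ∃ F ∈ homogeneousForms ℂ (EuclideanSpace ℂ ι) 3, ∃ G : ι → EuclideanSpace ℂ ι → ℂ,
      (∀ j, G j ∈ homogeneousForms ℂ (EuclideanSpace ℂ ι) 2) ∧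
      ∃ Q ∈ homogeneousForms ℝ (EuclideanSpace ℂ ι) 2, ∀ w,
        f w = ∑ j ∈ Finset.univ.erase i₀, (G j w * starRingEnd ℂ (w j)).re - (F w).re
          + (w i₀).re * Q w := by
  obtain ⟨F, hF, G, hG, h⟩ := exists_eq_on_hyperplane_of_mem_nearlyHolomorphicForms i₀
    (homogeneousForms_three_le_nearlyHolomorphicForms hf)
  have hmixed : (∑ j ∈ Finset.univ.erase i₀, fun w : EuclideanSpace ℂ ι ↦
      (G j w * starRingEnd ℂ (w j)).re) ∈ homogeneousForms ℝ (EuclideanSpace ℂ ι) 3 :=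
    sum_mem fun j _ ↦ re_mul_conj_clm_mem_homogeneousForms (hG j) (EuclideanSpace.proj j)
  obtain ⟨Q, hQ, hdiv⟩ := exists_eq_re_mul_of_mem_homogeneousForms (i₀ := i₀)
    (add_mem (sub_mem hf hmixed) (re_im_mem_homogeneousForms hF).1)
    (fun w hw ↦ by simp [h w hw])
  refine ⟨F, hF, G, hG, Q, hQ, fun w ↦ ?_⟩
  have := hdiv w
  simp only [Pi.add_apply, Pi.sub_apply, Finset.sum_apply] at this
  linarith

end NormalForm

section CoordinateChange

theorem isBigO_norm_rpow_of_le {E : Type*} [SeminormedAddCommGroup E] {a b : ℝ} (hab : a ≤ b)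
    (hb : b ≠ 0) : (fun x : E ↦ ‖x‖ ^ b) =O[𝓝 0] fun x ↦ ‖x‖ ^ a :=
  (IsBigO.rpow_rpow_nhdsGE_zero_of_le hab hb).comp_tendsto
    (tendsto_nhdsWithin_iff.2 ⟨tendsto_norm_zero, .of_forall norm_nonneg⟩)

theorem isBigO_normalized_of_isBigO {E : Type*} [NormedAddCommGroup E] [NormedSpace ℝ E]
    {l : Filter E} (hl : l ≤ 𝓝 0) {q : ℝ} (hq : q ∈ Icc 2 4) {s P₂ P₃ Z Q T : E → ℝ}
    (hP₂ : P₂ ∈ homogeneousForms ℝ E 2) (hP₃ : P₃ ∈ homogeneousForms ℝ E 3)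
    (hZ : Z ∈ homogeneousForms ℝ E 1) (hQ : Q ∈ homogeneousForms ℝ E 2)
    (hT : T ∈ homogeneousForms ℝ E 4)
    (h : (fun w ↦ s w - P₂ w - P₃ w) =O[l] fun w ↦ ‖w‖ ^ q) :
    (fun w ↦ s w - P₂ w - P₃ w + ((s w - P₂ w) * Z w + s w * Q w - T w))
      =O[l] fun w ↦ ‖w‖ ^ q := by
  have form {d : ℕ} {f : E → ℝ} (hf : f ∈ homogeneousForms ℝ E d) :
      f =O[l] fun w ↦ ‖w‖ ^ (d : ℝ) := by
    simpa using isBigO_of_mem_homogeneousForms hf l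
  have rpow_le {a b : ℝ} (hab : a ≤ b) (hb : b ≠ 0) :
      (fun w : E ↦ ‖w‖ ^ b) =O[l] fun w ↦ ‖w‖ ^ a := (isBigO_norm_rpow_of_le hab hb).mono hl
  have quartic {f : E → ℝ} (hf : f ∈ homogeneousForms ℝ E 4) : f =O[l] fun w ↦ ‖w‖ ^ q :=
    (form hf).trans (rpow_le (mod_cast hq.2) (by norm_num))
  have hs : s =O[l] fun w ↦ ‖w‖ ^ (2 : ℝ) := by
    refine ((h.trans (rpow_le hq.1 (by linarith [hq.1]))).add
      ((form hP₂).add ((form hP₃).trans (rpow_le (by norm_num) (by norm_num))))).congr_left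
      fun w ↦ by ring
  have hZ_one : Z =O[l] fun _ ↦ (1 : ℝ) := by
    simpa using (form hZ).trans (rpow_le (a := 0) (by norm_num) (by norm_num))
  have hsZ : (fun w ↦ (s w - P₂ w) * Z w) =O[l] fun w ↦ ‖w‖ ^ q := by
    refine ((h.mul hZ_one).congr_right fun w ↦ mul_one _).add
      (quartic (mul_mem_homogeneousForms hP₃ hZ)) |>.congr_left fun w ↦ ?_
    simp only [Pi.mul_apply]
    ring
  have hsQ : (fun w ↦ s w * Q w) =O[l] fun w ↦ ‖w‖ ^ q := by
    refine ((hs.mul (form hQ)).congr_right fun w ↦ ?_).trans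
      (rpow_le hq.2 four_ne_zero)
    rw [← Real.rpow_add_of_nonneg (norm_nonneg w) zero_le_two (by norm_num)]
    norm_num
  exact h.add ((hsZ.add hsQ).sub (quartic hT))

variable {ι : Type*} [Fintype ι] [DecidableEq ι] {i₀ : ι}

/-- The last three terms vanish to higher order on the zero set of `Re w i₀ - P₂ - P₃`, where
`Re w i₀` is quadratically small. The cubic form to be normalized is `P₃ + P₂ Z`, since there
`Re w i₀ * Z` agrees with `P₂ Z` to third order. -/
theorem exists_normalizing_forms {P₂ P₃ : EuclideanSpace ℂ ι → ℝ}
    (hP₂ : P₂ ∈ homogeneousForms ℝ (EuclideanSpace ℂ ι) 2)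
    (hlevi : ∀ v : EuclideanSpace ℂ ι, v i₀ = 0 →
      (P₂ v + P₂ (Complex.I • v)) / 2 = tangentialNormSq i₀ v)
    (hP₃ : P₃ ∈ homogeneousForms ℝ (EuclideanSpace ℂ ι) 3) :
    ∃ F₂ ∈ homogeneousForms ℂ (EuclideanSpace ℂ ι) 2,
      ∃ F₃ ∈ homogeneousForms ℂ (EuclideanSpace ℂ ι) 3, ∃ G : ι → EuclideanSpace ℂ ι → ℂ,
      (∀ j, G j ∈ homogeneousForms ℂ (EuclideanSpace ℂ ι) 2) ∧
      ∃ Z ∈ homogeneousForms ℝ (EuclideanSpace ℂ ι) 1,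
      ∃ Q ∈ homogeneousForms ℝ (EuclideanSpace ℂ ι) 2,
      ∃ T ∈ homogeneousForms ℝ (EuclideanSpace ℂ ι) 4, ∀ w,
        (w i₀ + (F₂ w + F₃ w)).re - ∑ j ∈ Finset.univ.erase i₀, ‖w j + G j w‖ ^ 2 =
          (w i₀).re - P₂ w - P₃ w + (((w i₀).re - P₂ w) * Z w + (w i₀).re * Q w - T w) := by
  obtain ⟨F₂, hF₂, Z, hZ, h₂⟩ := exists_quadratic_normal_form hP₂ hlevi
  obtain ⟨F₃, hF₃, G, hG, Q, hQ, h₃⟩ := exists_cubic_normal_form i₀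
    (add_mem hP₃ (mul_mem_homogeneousForms hP₂ hZ))
  let T : EuclideanSpace ℂ ι → ℝ := ∑ j ∈ Finset.univ.erase i₀,
    (1 / 4 : ℝ) • ((fun w ↦ (G j w).re) * (fun w ↦ (G j w).re) +
      (fun w ↦ (G j w).im) * fun w ↦ (G j w).im)
  have hT : T ∈ homogeneousForms ℝ (EuclideanSpace ℂ ι) 4 := sum_mem fun j _ ↦ by
    obtain ⟨hre, him⟩ := re_im_mem_homogeneousForms (hG j)
    exact Submodule.smul_mem _ _ (add_mem (mul_mem_homogeneousForms hre hre)
      (mul_mem_homogeneousForms him him))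
  refine ⟨F₂, hF₂, F₃, hF₃, fun j ↦ (1 / 2 : ℂ) • G j, fun j ↦ Submodule.smul_mem _ _ (hG j),
    Z, hZ, Q, hQ, T, hT, fun w ↦ ?_⟩
  have norm_sq_eq (j : ι) : ‖w j + ((1 / 2 : ℂ) • G j) w‖ ^ 2 = ‖w j‖ ^ 2 +
      (G j w * starRingEnd ℂ (w j)).re +
      1 / 4 * ((G j w).re * (G j w).re + (G j w).im * (G j w).im) := by
    simp only [← Complex.normSq_eq_norm_sq, Complex.normSq_apply]
    simp
    ring
  have sum_eq : ∑ j ∈ Finset.univ.erase i₀, ‖w j + ((1 / 2 : ℂ) • G j) w‖ ^ 2 =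
      tangentialNormSq i₀ w + ∑ j ∈ Finset.univ.erase i₀, (G j w * starRingEnd ℂ (w j)).re
        + T w := by
    rw [Finset.sum_congr rfl fun j _ ↦ norm_sq_eq j, Finset.sum_add_distrib,
      Finset.sum_add_distrib]
    simp only [tangentialNormSq, T, Finset.sum_apply, Pi.smul_apply, Pi.add_apply, Pi.mul_apply,
      smul_eq_mul]
  have h₃' := h₃ w
  simp only [Pi.add_apply, Pi.mul_apply] at h₃'
  rw [sum_eq, Complex.add_re, Complex.add_re]
  linear_combination h₂ w + h₃'

end CoordinateChange

section NearIdentity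

variable {𝕜 E : Type*} [RCLike 𝕜] [NormedAddCommGroup E] [NormedSpace 𝕜 E] {f : E → E}

theorem isBigO_id_of_sub_isBigO (h : (fun x ↦ f x - x) =O[𝓝 0] fun x ↦ ‖x‖ ^ 2) :
    (fun x ↦ x) =O[𝓝 0] f :=
  (h.trans_isLittleO (isLittleO_norm_pow_id one_lt_two)).right_isBigO_add.congr_right
    fun x ↦ sub_add_cancel (f x) x

theorem exists_isOpen_injOn_of_sub_isBigO [CompleteSpace E] (hf : ContDiffAt 𝕜 1 f 0)
    (h : (fun x ↦ f x - x) =O[𝓝 0] fun x ↦ ‖x‖ ^ 2) : ∃ U, IsOpen U ∧ 0 ∈ U ∧ InjOn f U := by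
  have hderiv : HasFDerivAt f (ContinuousLinearEquiv.refl 𝕜 E : E →L[𝕜] E) 0 := by
    have : HasFDerivAt (fun x ↦ f x - x) (0 : E →L[𝕜] E) 0 :=
      IsBigO.hasFDerivAt (n := 2) (by simpa using h) one_lt_two
    exact (this.add (hasFDerivAt_id 0)).congr_fderiv (zero_add _) |>.congr_of_eventuallyEq
      (.of_forall fun x ↦ (sub_add_cancel (f x) x).symm)
  let e := (hf.hasStrictFDerivAt' hderiv one_ne_zero).toOpenPartialHomeomorph f
  exact ⟨e.source, e.open_source,
    (hf.hasStrictFDerivAt' hderiv one_ne_zero).mem_toOpenPartialHomeomorph_source, e.injOn⟩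

end NearIdentity

section SphereModel

variable {ι : Type*} [Fintype ι]

theorem add_toLp_near_identity {H : ι → EuclideanSpace ℂ ι → ℂ}
    (hH : ∀ j, H j ∈ homogeneousForms ℂ (EuclideanSpace ℂ ι) 2 ⊔
      homogeneousForms ℂ (EuclideanSpace ℂ ι) 3) :
    ContDiff ℂ 1 (fun w ↦ w + WithLp.toLp 2 fun j ↦ H j w) ∧
      (fun w ↦ (w + WithLp.toLp 2 fun j ↦ H j w) - w) =O[𝓝 0] fun w ↦ ‖w‖ ^ 2 := by
  have component (j : ι) : ContDiff ℂ 1 (H j) ∧ H j =O[𝓝 0] fun w ↦ ‖w‖ ^ 2 := by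
    obtain ⟨f, hf, g, hg, hfg⟩ := Submodule.mem_sup.1 (hH j)
    rw [← hfg]
    exact ⟨(contDiff_of_mem_homogeneousForms hf).add (contDiff_of_mem_homogeneousForms hg),
      (isBigO_of_mem_homogeneousForms hf _).add
        ((isBigO_of_mem_homogeneousForms hg _).trans
          (isLittleO_norm_pow_norm_pow (by norm_num)).isBigO)⟩
  refine ⟨contDiff_id.add ((PiLp.contDiff_toLp).comp (contDiff_pi.2 fun j ↦ (component j).1)), ?_⟩
  simp only [add_sub_cancel_left]
  exact ((PiLp.continuousLinearEquiv 2 ℂ fun _ : ι ↦ ℂ).symm.isBigO_comp _ _).trans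
    (isBigO_pi.2 fun j ↦ (component j).2)

variable [DecidableEq ι] {i₀ : ι}

theorem norm_le_abs_re_add_abs_im_add_sqrt (i₀ : ι) (ζ : EuclideanSpace ℂ ι) :
    ‖ζ‖ ≤ |(ζ i₀).re| + (√(tangentialNormSq i₀ ζ) + |(ζ i₀).im|) := by
  have hsq : ‖ζ‖ ^ 2 = ‖ζ i₀‖ ^ 2 + tangentialNormSq i₀ ζ := by
    rw [EuclideanSpace.norm_sq_eq, ← Finset.add_sum_erase _ _ (Finset.mem_univ i₀)]
    rfl
  have hnonneg : 0 ≤ tangentialNormSq i₀ ζ := Finset.sum_nonneg fun _ _ ↦ sq_nonneg _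
  have hle : ‖ζ‖ ≤ ‖ζ i₀‖ + √(tangentialNormSq i₀ ζ) := by
    refine abs_le_of_sq_le_sq' ?_ (by positivity) |>.2
    nlinarith [Real.sq_sqrt hnonneg, Real.sqrt_nonneg (tangentialNormSq i₀ ζ), norm_nonneg (ζ i₀)]
  linarith [Complex.norm_le_abs_re_add_abs_im (ζ i₀)]

theorem add_rpow_isBigO_rpow_add_rpow {α : Type*} {l : Filter α} {a b : α → ℝ} (ha : ∀ x, 0 ≤ a x)
    (hb : ∀ x, 0 ≤ b x) {q : ℝ} (hq : 1 ≤ q) :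
    (fun x ↦ (a x + b x) ^ q) =O[l] fun x ↦ a x ^ q + b x ^ q := by
  refine IsBigO.of_bound (2 ^ (q - 1)) (.of_forall fun x ↦ ?_)
  lift a to α → ℝ≥0 using ha
  lift b to α → ℝ≥0 using hb
  rw [Real.norm_of_nonneg (by positivity), Real.norm_of_nonneg (by positivity)]
  exact_mod_cast NNReal.rpow_add_le_mul_rpow_add_rpow (a x) (b x) hq

/-- The hypothesis forces `Re ζ i₀ = o(‖ζ‖)`, so that `‖ζ‖` is controlled by the remaining real
coordinates. -/
theorem isBigO_sqrt_rpow_add_abs_im_rpow {l : Filter (EuclideanSpace ℂ ι)} (hl : l ≤ 𝓝 0) {q : ℝ}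
    (hq : 2 ≤ q)
    (h : (fun ζ ↦ (ζ i₀).re - tangentialNormSq i₀ ζ) =O[l] fun ζ ↦ ‖ζ‖ ^ q) :
    (fun ζ ↦ (ζ i₀).re - tangentialNormSq i₀ ζ) =O[l]
      fun ζ ↦ √(tangentialNormSq i₀ ζ) ^ q + |(ζ i₀).im| ^ q := by
  have re_isLittleO : (fun ζ : EuclideanSpace ℂ ι ↦ (ζ i₀).re) =o[l] fun ζ ↦ ζ := by
    have hquad : (fun ζ : EuclideanSpace ℂ ι ↦ (ζ i₀).re) =O[l] fun ζ ↦ ‖ζ‖ ^ 2 := by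
      refine IsBigO.congr_left (h.trans ?_ |>.add (isBigO_of_mem_homogeneousForms
        tangentialNormSq_mem_homogeneousForms l)) fun ζ ↦ sub_add_cancel _ _
      simpa using (isBigO_norm_rpow_of_le hq (by linarith)).mono hl
    exact hquad.trans_isLittleO ((isLittleO_norm_pow_id one_lt_two).mono hl)
  have norm_isBigO : (fun ζ ↦ ‖ζ‖) =O[l]
      fun ζ : EuclideanSpace ℂ ι ↦ √(tangentialNormSq i₀ ζ) + |(ζ i₀).im| := by
    refine IsBigO.of_bound 2 ((re_isLittleO.def (half_pos one_pos)).mono fun ζ hζ ↦ ?_)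
    rw [norm_norm, Real.norm_of_nonneg (by positivity)]
    rw [Real.norm_eq_abs] at hζ
    linarith [norm_le_abs_re_add_abs_im_add_sqrt i₀ ζ]
  refine h.trans ((norm_isBigO.rpow (by linarith) (.of_forall fun ζ ↦ by positivity)).trans
    (add_rpow_isBigO_rpow_add_rpow (fun ζ ↦ Real.sqrt_nonneg _) (fun ζ ↦ abs_nonneg _)
      (by linarith)))

theorem exists_normal_coordinates {P₂ P₃ : EuclideanSpace ℂ ι → ℝ}
    (hP₂ : P₂ ∈ homogeneousForms ℝ (EuclideanSpace ℂ ι) 2)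
    (hlevi : ∀ v : EuclideanSpace ℂ ι, v i₀ = 0 →
      (P₂ v + P₂ (Complex.I • v)) / 2 = tangentialNormSq i₀ v)
    (hP₃ : P₃ ∈ homogeneousForms ℝ (EuclideanSpace ℂ ι) 3)
    {l : Filter (EuclideanSpace ℂ ι)} (hl : l ≤ 𝓝 0) {q : ℝ} (hq : q ∈ Icc 2 4)
    (h : (fun w ↦ (w i₀).re - P₂ w - P₃ w) =O[l] fun w ↦ ‖w‖ ^ q) :
    ∃ Φ : EuclideanSpace ℂ ι → EuclideanSpace ℂ ι, Differentiable ℂ Φ ∧ Φ 0 = 0 ∧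
      (∃ U, IsOpen U ∧ 0 ∈ U ∧ InjOn Φ U) ∧
      (fun w ↦ (Φ w i₀).re - tangentialNormSq i₀ (Φ w)) =O[l]
        fun w ↦ √(tangentialNormSq i₀ (Φ w)) ^ q + |(Φ w i₀).im| ^ q := by
  obtain ⟨F₂, hF₂, F₃, hF₃, G, hG, Z, hZ, Q, hQ, T, hT, normal_form⟩ :=
    exists_normalizing_forms hP₂ hlevi hP₃
  let H : ι → EuclideanSpace ℂ ι → ℂ := Function.update G i₀ (F₂ + F₃)
  have hH : ∀ j, H j ∈ homogeneousForms ℂ (EuclideanSpace ℂ ι) 2 ⊔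
      homogeneousForms ℂ (EuclideanSpace ℂ ι) 3 :=
    (Function.forall_update_iff G fun _ f ↦ f ∈ _).2
      ⟨Submodule.add_mem_sup hF₂ hF₃, fun j _ ↦ Submodule.mem_sup_left (hG j)⟩
  let Φ : EuclideanSpace ℂ ι → EuclideanSpace ℂ ι := fun w ↦ w + WithLp.toLp 2 fun j ↦ H j w
  obtain ⟨hΦ_contDiff, hΦ_isBigO⟩ :
    ContDiff ℂ 1 Φ ∧ (fun w ↦ Φ w - w) =O[𝓝 0] fun w ↦ ‖w‖ ^ 2 := add_toLp_near_identity hH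
  have hΦ_zero : Φ 0 = 0 := by
    have : (fun w ↦ Φ w - w) =O[𝓝 0] fun w ↦ ‖w - 0‖ ^ 2 := by simpa only [sub_zero]
    simpa only [sub_zero] using this.eq_zero_of_norm_pow two_ne_zero
  refine ⟨Φ, hΦ_contDiff.differentiable one_ne_zero, hΦ_zero,
    exists_isOpen_injOn_of_sub_isBigO hΦ_contDiff.contDiffAt hΦ_isBigO, ?_⟩
  have hΦ_tendsto : Tendsto Φ l (𝓝 0) := by
    simpa only [hΦ_zero] using (hΦ_contDiff.continuous.tendsto 0).mono_left hl
  have hnorm : (fun w ↦ ‖w‖ ^ q) =O[l] fun w ↦ ‖Φ w‖ ^ q :=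
    (((isBigO_id_of_sub_isBigO hΦ_isBigO).mono hl).norm_norm).rpow (by linarith [hq.1])
      (.of_forall fun w ↦ norm_nonneg _)
  refine (isBigO_sqrt_rpow_add_abs_im_rpow hΦ_tendsto hq.1 (i₀ := i₀)
    (isBigO_map.2 ?_)).comp_tendsto tendsto_map
  refine ((isBigO_normalized_of_isBigO hl hq hP₂ hP₃ hZ hQ hT h).trans hnorm).congr_left fun w ↦ ?_
  have sum_eq : ∑ j ∈ Finset.univ.erase i₀, ‖w j + G j w‖ ^ 2 = tangentialNormSq i₀ (Φ w) :=
    Finset.sum_congr rfl fun j hj ↦ by simp [Φ, H, Finset.ne_of_mem_erase hj]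
  rw [← normal_form w, sum_eq]
  simp [Φ, H]

end SphereModel

section Taylor

open scoped Nat

variable {E F : Type*} [NormedAddCommGroup E] [NormedSpace ℝ E] [NormedAddCommGroup F]
  [NormedSpace ℝ F] [CompleteSpace F] {f : E → F} {x y : E}

theorem sub_taylor_eq_integral {m : ℕ}
    (hf : ∀ t ∈ Icc (0 : ℝ) 1, ContDiffAt ℝ (m + 1) f (x + t • y)) :
    f (x + y) - ∑ j ∈ Finset.range (m + 2), (j ! : ℝ)⁻¹ • iteratedFDeriv ℝ j f x (fun _ ↦ y) =
      (m ! : ℝ)⁻¹ • ∫ t in (0 : ℝ)..1, (1 - t) ^ m •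
        (iteratedFDeriv ℝ (m + 1) f (x + t • y) - iteratedFDeriv ℝ (m + 1) f x) fun _ ↦ y := by
  have integrable : IntervalIntegrable
      (fun t : ℝ ↦ (1 - t) ^ m • iteratedFDeriv ℝ (m + 1) f (x + t • y) fun _ ↦ y) volume 0 1 := by
    refine ContinuousOn.intervalIntegrable fun t ht ↦ ?_
    rw [uIcc_of_le zero_le_one] at ht
    have hD : ContinuousAt (fun t : ℝ ↦ iteratedFDeriv ℝ (m + 1) f (x + t • y)) t :=
      ((hf t ht).continuousAt_iteratedFDeriv (k := m + 1) (by norm_cast)).comp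
        (f := fun t : ℝ ↦ x + t • y) (by fun_prop)
    have : ContinuousAt (fun t : ℝ ↦ iteratedFDeriv ℝ (m + 1) f (x + t • y) fun _ ↦ y) t :=
      (ContinuousMultilinearMap.apply ℝ (fun _ : Fin (m + 1) ↦ E) F fun _ ↦ y).continuous
        |>.continuousAt.comp hD
    exact ContinuousAt.continuousWithinAt (by fun_prop)
  have integral_pow : ∫ t in (0 : ℝ)..1, (1 - t) ^ m = (m + 1 : ℝ)⁻¹ := by
    rw [intervalIntegral.integral_comp_sub_left (fun t : ℝ ↦ t ^ m)]
    simp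
  simp only [_root_.sub_apply, smul_sub]
  rw [intervalIntegral.integral_sub integrable (Continuous.intervalIntegrable (by fun_prop) _ _),
    intervalIntegral.integral_smul_const, integral_pow,
    map_add_eq_sum_add_integral_iteratedFDeriv hf, Finset.sum_range_succ _ (m + 1),
    smul_sub, smul_smul, ← mul_inv, Nat.factorial_succ]
  push_cast
  rw [mul_comm (m ! : ℝ)]
  abel

theorem norm_sub_taylor_le {m : ℕ} {M : ℝ}
    (hf : ∀ t ∈ Icc (0 : ℝ) 1, ContDiffAt ℝ (m + 1) f (x + t • y))
    (hM : ∀ t ∈ Icc (0 : ℝ) 1,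
      ‖iteratedFDeriv ℝ (m + 1) f (x + t • y) - iteratedFDeriv ℝ (m + 1) f x‖ ≤ M) :
    ‖f (x + y) - ∑ j ∈ Finset.range (m + 2), (j ! : ℝ)⁻¹ • iteratedFDeriv ℝ j f x (fun _ ↦ y)‖
      ≤ M * ‖y‖ ^ (m + 1) := by
  rw [sub_taylor_eq_integral hf, norm_smul]
  have integrand_le : ∀ t ∈ uIoc (0 : ℝ) 1, ‖(1 - t) ^ m •
      (iteratedFDeriv ℝ (m + 1) f (x + t • y) - iteratedFDeriv ℝ (m + 1) f x) fun _ ↦ y‖ ≤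
        M * ‖y‖ ^ (m + 1) := fun t ht ↦ by
    rw [uIoc_of_le zero_le_one] at ht
    have hpow : ‖(1 - t) ^ m‖ ≤ 1 := by
      rw [norm_pow, Real.norm_of_nonneg (by linarith [ht.2])]
      exact pow_le_one₀ (by linarith [ht.2]) (by linarith [ht.1])
    rw [norm_smul]
    refine (mul_le_of_le_one_left (norm_nonneg _) hpow).trans ?_
    exact (ContinuousMultilinearMap.le_opNorm_mul_pow_of_le _ (pi_norm_const_le y)).trans
      (by gcongr; exact hM t ⟨ht.1.le, ht.2⟩)
  have integral_le := intervalIntegral.norm_integral_le_of_norm_le_const integrand_le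
  rw [sub_zero, abs_one, mul_one] at integral_le
  refine (mul_le_of_le_one_left (norm_nonneg _) ?_).trans integral_le
  rw [norm_inv, Real.norm_natCast]
  exact inv_le_one_of_one_le₀ (mod_cast Nat.factorial_pos m)

theorem isBigO_sub_taylor_of_contDiffPointwiseHolderAt {k : ℕ} {α : unitInterval}
    (h : ContDiffPointwiseHolderAt k α f x) :
    (fun y ↦ f (x + y) - ∑ j ∈ Finset.range (k + 1),
      (j ! : ℝ)⁻¹ • iteratedFDeriv ℝ j f x fun _ ↦ y) =O[𝓝 0] fun y ↦ ‖y‖ ^ (k + α : ℝ) := by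
  cases k with
  | zero =>
    have htendsto : Tendsto (x + ·) (𝓝 0) (𝓝 x) := by
      simpa using (continuous_const_add x).tendsto 0
    simpa [Function.comp_def] using
      (ContDiffPointwiseHolderAt.zero_order_iff.1 h).2.comp_tendsto htendsto
  | succ m =>
    obtain ⟨C, hC, hbound⟩ := h.isBigO.exists_pos
    obtain ⟨r, hr, hball⟩ := Metric.eventually_nhds_iff_ball.1
      ((h.contDiffAt.eventually (by simp)).and hbound.bound)
    refine IsBigO.of_bound C ?_
    filter_upwards [Metric.ball_mem_nhds 0 hr] with y hy
    rw [mem_ball_zero_iff] at hy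
    have norm_le {t : ℝ} (ht : t ∈ Icc (0 : ℝ) 1) : ‖t • y‖ ≤ ‖y‖ := by
      rw [norm_smul, Real.norm_of_nonneg ht.1]
      exact mul_le_of_le_one_left (norm_nonneg y) ht.2
    have mem_ball {t : ℝ} (ht : t ∈ Icc (0 : ℝ) 1) : x + t • y ∈ ball x r := by
      simpa [Metric.mem_ball, dist_eq_norm] using (norm_le ht).trans_lt hy
    refine (norm_sub_taylor_le (M := C * ‖y‖ ^ (α : ℝ)) (fun t ht ↦ ?_) fun t ht ↦ ?_).trans_eq ?_
    · exact_mod_cast (hball _ (mem_ball ht)).1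
    · refine (hball _ (mem_ball ht)).2.trans ?_
      rw [add_sub_cancel_left, Real.norm_of_nonneg (by positivity)]
      gcongr
      exacts [α.2.1, norm_le ht]
    · rw [Real.norm_of_nonneg (by positivity), mul_assoc, ← Real.rpow_natCast,
        ← Real.rpow_add_of_nonneg (norm_nonneg y) α.2.1 (by positivity), add_comm]

end Taylor

section OrthonormalCoordinates

variable {ι : Type*} [Fintype ι]

theorem exists_orthonormalBasis_apply_eq {𝕜 E : Type*} [RCLike 𝕜] [NormedAddCommGroup E]
    [InnerProductSpace 𝕜 E] [FiniteDimensional 𝕜 E] (hcard : Module.finrank 𝕜 E = Fintype.card ι)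
    (i₀ : ι) {e : E} (he : ‖e‖ = 1) : ∃ b : OrthonormalBasis ι 𝕜 E, b i₀ = e := by
  have horth : Orthonormal 𝕜 (({i₀} : Set ι).domRestrict fun _ ↦ e) :=
    orthonormal_subsingleton_iff.2 fun _ ↦ he
  obtain ⟨b, hb⟩ := horth.exists_orthonormalBasis_extension_of_card_eq hcard
  exact ⟨b, hb i₀ rfl⟩

variable {V : Type*} [AddCommGroup V] [Module ℂ V]

theorem exists_core_of_pos_on_ker {B : V →ₗ⋆[ℂ] V →ₗ[ℂ] ℂ} (hB : B.IsSymm) {ℓ : V →ₗ[ℂ] ℂ} {e : V}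
    (he : ℓ e = 1) (hpos : ∀ x, x ≠ 0 → ℓ x = 0 → 0 < (B x x).re) :
    ∃ c : InnerProductSpace.Core ℂ V, ∀ x y,
      c.inner x y = B (x - ℓ x • e) (y - ℓ y • e) + starRingEnd ℂ (ℓ x) * ℓ y := by
  have ker (x : V) : ℓ (x - ℓ x • e) = 0 := by simp [he]
  have nonneg (x : V) : 0 ≤ (B (x - ℓ x • e) (x - ℓ x • e)).re := by
    by_cases hx : x - ℓ x • e = 0
    · simp [hx]
    · exact (hpos _ hx (ker x)).le
  have re_eq (x : V) : (B (x - ℓ x • e) (x - ℓ x • e) + starRingEnd ℂ (ℓ x) * ℓ x).re =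
      (B (x - ℓ x • e) (x - ℓ x • e)).re + ‖ℓ x‖ ^ 2 := by
    rw [Complex.add_re, Complex.conj_mul', ← Complex.ofReal_pow, Complex.ofReal_re]
  refine ⟨{ inner := fun x y ↦ B (x - ℓ x • e) (y - ℓ y • e) + starRingEnd ℂ (ℓ x) * ℓ y
            conj_inner_symm := fun x y ↦ by simp only [map_add, map_mul, hB.eq, Complex.conj_conj,
              mul_comm]
            re_inner_nonneg := fun x ↦ (add_nonneg (nonneg x) (sq_nonneg _)).trans_eq (re_eq x).symm
            add_left := fun x y z ↦ ?_
            smul_left := fun x y r ↦ ?_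
            definite := fun x hx ↦ ?_ }, fun x y ↦ rfl⟩
  · simp only [map_add, add_smul, add_sub_add_comm, LinearMap.add_apply]
    ring
  · have : r • x - ℓ (r • x) • e = r • (x - ℓ x • e) := by simp [smul_sub, mul_smul]
    rw [this, map_smulₛₗ, LinearMap.smul_apply, map_smul, smul_eq_mul, smul_eq_mul, map_mul]
    ring
  · have hre := re_eq x
    rw [hx, Complex.zero_re] at hre
    have hℓ : ℓ x = 0 := by
      rw [← norm_eq_zero, ← sq_eq_zero_iff]
      linarith [nonneg x, sq_nonneg ‖ℓ x‖]
    by_contra hne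
    have := hpos x hne hℓ
    simp only [hℓ, zero_smul, sub_zero, norm_zero] at hre
    linarith

variable [FiniteDimensional ℂ V] [DecidableEq ι]

theorem exists_linearEquiv_of_pos_on_ker (hcard : Module.finrank ℂ V = Fintype.card ι) (i₀ : ι)
    {B : V →ₗ⋆[ℂ] V →ₗ[ℂ] ℂ} (hB : B.IsSymm) {ℓ : V →ₗ[ℂ] ℂ} (hℓ : ℓ ≠ 0)
    (hpos : ∀ x, x ≠ 0 → ℓ x = 0 → 0 < (B x x).re) :
    ∃ Ψ : V ≃ₗ[ℂ] EuclideanSpace ℂ ι, (∀ x, Ψ x i₀ = ℓ x) ∧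
      ∀ x, ℓ x = 0 → (B x x).re = tangentialNormSq i₀ (Ψ x) := by
  obtain ⟨e, he⟩ := LinearMap.surjective hℓ 1
  obtain ⟨c, hc⟩ := exists_core_of_pos_on_ker hB he hpos
  let _ : NormedAddCommGroup V := c.toNormedAddCommGroup
  let _ : InnerProductSpace ℂ V := InnerProductSpace.ofCore c.toCore
  have inner_eq (x y : V) : inner ℂ x y =
    B (x - ℓ x • e) (y - ℓ y • e) + starRingEnd ℂ (ℓ x) * ℓ y := hc x y
  have norm_e : ‖e‖ = 1 := by
    rw [← sq_eq_sq₀ (norm_nonneg e) zero_le_one, norm_sq_eq_re_inner (𝕜 := ℂ), inner_eq]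
    simp [he]
  obtain ⟨b, rfl⟩ := exists_orthonormalBasis_apply_eq hcard i₀ norm_e
  have repr_eq (x : V) : b.repr x i₀ = ℓ x := by
    rw [b.repr_apply_apply, inner_eq]
    simp [he]
  refine ⟨b.repr.toLinearEquiv, repr_eq, fun x hx ↦ ?_⟩
  have norm_sq : (B x x).re = ‖x‖ ^ 2 := by
    rw [norm_sq_eq_re_inner (𝕜 := ℂ), inner_eq]
    simp [hx]
  rw [norm_sq, ← b.repr.norm_map, EuclideanSpace.norm_sq_eq,
    ← Finset.add_sum_erase _ _ (Finset.mem_univ i₀), repr_eq, hx]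
  simp [tangentialNormSq]

end OrthonormalCoordinates

section LeviForm

variable {V : Type*} [AddCommGroup V] [Module ℂ V] [Module ℝ V] [IsScalarTower ℝ ℂ V]

/-- The part of the real bilinear form `D` invariant under multiplication by `I` in both
arguments. -/
def leviBilinear (D : V →ₗ[ℝ] V →ₗ[ℝ] ℝ) : V →ₗ[ℝ] V →ₗ[ℝ] ℝ :=
  let J : V →ₗ[ℝ] V := Module.toModuleEnd ℝ (S := ℂ) V Complex.I
  (1 / 4 : ℝ) • (D + D.compl₁₂ J J)

variable {D : V →ₗ[ℝ] V →ₗ[ℝ] ℝ}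

theorem leviBilinear_apply (D : V →ₗ[ℝ] V →ₗ[ℝ] ℝ) (x y : V) :
    leviBilinear D x y = (D x y + D (Complex.I • x) (Complex.I • y)) / 4 := by
  simp [leviBilinear]
  ring

theorem leviBilinear_I_smul (D : V →ₗ[ℝ] V →ₗ[ℝ] ℝ) (x y : V) :
    leviBilinear D (Complex.I • x) y = -leviBilinear D x (Complex.I • y) := by
  simp only [leviBilinear_apply, smul_smul, Complex.I_mul_I, neg_one_smul, map_neg,
    LinearMap.neg_apply]
  ring

theorem leviBilinear_smul (D : V →ₗ[ℝ] V →ₗ[ℝ] ℝ) (c : ℂ) (x y : V) :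
    leviBilinear D (c • x) y = leviBilinear D x (starRingEnd ℂ c • y) := by
  have decompose (a b : ℝ) (z : V) : ((a + b * Complex.I : ℂ)) • z = a • z + b • Complex.I • z := by
    simp only [add_smul, mul_smul, ← Complex.coe_algebraMap, algebraMap_smul]
  have conj_eq : starRingEnd ℂ c = c.re + (-c.im : ℝ) * Complex.I := by
    apply Complex.ext <;> simp
  rw [conj_eq, ← Complex.re_add_im c, decompose, decompose]
  simp [leviBilinear_I_smul]

/-- The Hermitian form with real part `leviBilinear D`. For `D` the second derivative of a function,
its quadratic form is the Levi form. -/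
def leviSesquilinear (D : V →ₗ[ℝ] V →ₗ[ℝ] ℝ) : V →ₗ⋆[ℂ] V →ₗ[ℂ] ℂ where
  toFun x := Module.Dual.extendRCLike (leviBilinear D x)
  map_add' x y := by
    ext z
    simp [Module.Dual.extendRCLike_apply]
    ring
  map_smul' c x := by
    ext y
    have (y : V) : (Module.Dual.extendRCLike (leviBilinear D (c • x)) : V →ₗ[ℂ] ℂ) y =
        (Module.Dual.extendRCLike (leviBilinear D x) : V →ₗ[ℂ] ℂ) (starRingEnd ℂ c • y) := by
      simp only [Module.Dual.extendRCLike_apply, leviBilinear_smul, smul_comm _ (RCLike.I : ℂ)]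
    simp [this]

theorem leviSesquilinear_isSymm (hD : D.IsSymm) : (leviSesquilinear D).IsSymm := by
  have symm (x y : V) : leviBilinear D x y = leviBilinear D y x := by
    simp only [leviBilinear_apply, ← hD.eq x, ← hD.eq (Complex.I • x), RingHom.id_apply]
  refine ⟨fun x y ↦ ?_⟩
  simp [leviSesquilinear, Module.Dual.extendRCLike_apply, symm y, leviBilinear_I_smul]

theorem re_leviSesquilinear_self (x : V) : (leviSesquilinear D x x).re =
    (D x x + D (Complex.I • x) (Complex.I • x)) / 4 := by
  simp [leviSesquilinear, ← leviBilinear_apply, ← RCLike.re_eq_complex_re]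

end LeviForm

section DefiningFunctions

theorem exists_cubic_taylor_of_contDiffPointwiseHolderAt {E : Type*} [NormedAddCommGroup E]
    [NormedSpace ℝ E] [FiniteDimensional ℝ E] {f : E → ℝ} {x : E} {k : ℕ} (hk : k ≤ 1)
    {α : unitInterval} (h : ContDiffPointwiseHolderAt (k + 2) α f x) :
    ∃ P ∈ homogeneousForms ℝ E 3, (fun y ↦ f (x + y) -
      (f x + fderiv ℝ f x y + 2⁻¹ * iteratedFDeriv ℝ 2 f x (fun _ ↦ y) + P y))
        =O[𝓝 0] fun y ↦ ‖y‖ ^ (2 + (k + α) : ℝ) := by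
  have taylor := isBigO_sub_taylor_of_contDiffPointwiseHolderAt h
  push_cast at taylor
  simp only [show (k + 2 + α : ℝ) = 2 + (k + α) by ring] at taylor
  interval_cases k
  · refine ⟨0, zero_mem _, ?_⟩
    simpa [Finset.sum_range_succ, iteratedFDeriv_one_apply] using taylor
  · refine ⟨_, Submodule.smul_mem _ (6⁻¹ : ℝ) (diagonal_mem_homogeneousForms
      (iteratedFDeriv ℝ 3 f x)), ?_⟩
    simpa [Finset.sum_range_succ, iteratedFDeriv_one_apply, Nat.factorial] using taylor

theorem eq_zero_of_mem_frontier {X : Type*} [TopologicalSpace X] {Ω W : Set X} {ρ : X → ℝ}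
    (hW : IsOpen W) (hρ : ContinuousOn ρ W) (hΩ : Ω ∩ W = {z ∈ W | ρ z < 0}) {z : X}
    (hz : z ∈ frontier Ω) (hzW : z ∈ W) : ρ z = 0 := by
  have hcont : ContinuousAt ρ z := hρ.continuousAt (hW.mem_nhds hzW)
  have mem_iff {w : X} (hw : w ∈ W) : w ∈ Ω ↔ ρ w < 0 := by
    simpa [hw] using Set.ext_iff.1 hΩ w
  refine le_antisymm (le_of_not_gt fun hpos ↦ ?_) (le_of_not_gt fun hneg ↦ hz.2 ?_)
  · obtain ⟨w, ⟨hwW, hw⟩, hwΩ⟩ := mem_closure_iff_nhds.1 hz.1 _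
      (Filter.inter_mem (hW.mem_nhds hzW) (hcont.eventually_const_lt hpos))
    exact lt_asymm hw ((mem_iff hwW).1 hwΩ)
  · rw [mem_interior_iff_mem_nhds]
    filter_upwards [hW.mem_nhds hzW, hcont.eventually_lt_const hneg] with w hwW hw
    exact (mem_iff hwW).2 hw

variable {ρ : Cn n → ℝ} {p : Cn n}

theorem leviForm_eq_iteratedFDeriv (hρ : ContDiffAt ℝ 2 ρ p) (X : Cn n) :
    leviForm ρ p X = (iteratedFDeriv ℝ 2 ρ p (fun _ ↦ X) +
      iteratedFDeriv ℝ 2 ρ p (fun _ ↦ Complex.I • X)) / 4 := by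
  have hdiff : DifferentiableAt ℝ (fderiv ℝ ρ) p :=
    (hρ.fderiv_right (m := 1) (by norm_num)).differentiableAt one_ne_zero
  have fderiv_apply (Y : Cn n) : fderiv ℝ (fun w ↦ fderiv ℝ ρ w Y) p Y =
      iteratedFDeriv ℝ 2 ρ p (fun _ ↦ Y) := by
    rw [iteratedFDeriv_two_apply, (hdiff.hasFDerivAt.clm_apply (hasFDerivAt_const Y p)).fderiv]
    simp
  rw [leviForm, fderiv_apply, fderiv_apply]

theorem leviForm_eq_re_leviSesquilinear (hρ : ContDiffAt ℝ 2 ρ p) (X : Cn n) :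
    leviForm ρ p X = (leviSesquilinear (fderiv ℝ (fderiv ℝ ρ) p).toBilinForm X X).re := by
  rw [leviForm_eq_iteratedFDeriv hρ, re_leviSesquilinear_self, iteratedFDeriv_two_apply,
    iteratedFDeriv_two_apply]
  simp

theorem cderiv_eq_extendRCLike (ρ : Cn n → ℝ) (p X : Cn n) :
    cderiv ρ p X = StrongDual.extendRCLike (fderiv ℝ ρ p) X / 2 := rfl

theorem exists_levi_coordinates (hρ : ContDiffAt ℝ 2 ρ p) (hgrad : fderiv ℝ ρ p ≠ 0)
    (hlevi : ∀ X, X ≠ 0 → cderiv ρ p X = 0 → 0 < leviForm ρ p X) (i₀ : Fin n) :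
    ∃ Ψ : Cn n ≃L[ℂ] Cn n, (∀ X, fderiv ℝ ρ p X = -(Ψ X i₀).re) ∧
      ∀ X, Ψ X i₀ = 0 → leviForm ρ p X = tangentialNormSq i₀ (Ψ X) := by
  let ℓ : StrongDual ℂ (Cn n) := -StrongDual.extendRCLike (fderiv ℝ ρ p)
  have re_ℓ (X : Cn n) : fderiv ℝ ρ p X = -(ℓ X).re := by
    rw [show ℓ X = -StrongDual.extendRCLike (fderiv ℝ ρ p) X from rfl, Complex.neg_re, neg_neg]
    exact (StrongDual.re_extendRCLike_apply (𝕜 := ℂ) (fderiv ℝ ρ p) X).symm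
  have hℓ : (ℓ : Cn n →ₗ[ℂ] ℂ) ≠ 0 := fun h ↦ hgrad <| by
    ext X
    simpa [h] using (re_ℓ X).trans (congrArg (-Complex.re ·) (LinearMap.congr_fun h X))
  have hsymm : LinearMap.IsSymm (fderiv ℝ (fderiv ℝ ρ) p).toBilinForm :=
    ⟨fun X Y ↦ hρ.isSymmSndFDerivAt (by simp) X Y⟩
  obtain ⟨Ψ, hΨ, hΨlevi⟩ := exists_linearEquiv_of_pos_on_ker (by simp) i₀
    (leviSesquilinear_isSymm hsymm) hℓ fun X hX hker ↦ by
      rw [← leviForm_eq_re_leviSesquilinear hρ]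
      exact hlevi X hX (by simpa [cderiv_eq_extendRCLike, ℓ] using hker)
  refine ⟨Ψ.toContinuousLinearEquiv, fun X ↦ ?_, fun X hX ↦ ?_⟩
  · rw [re_ℓ]
    exact congrArg (-Complex.re ·) (hΨ X).symm
  · rw [leviForm_eq_re_leviSesquilinear hρ]
    exact hΨlevi X ((hΨ X).symm.trans hX)

theorem exists_cubic_boundary_equation {Ω : Set (Cn n)} {ε : ℝ} (hε : ε ∈ Icc (0 : ℝ) 1) {k : ℕ}
    (hk : k ≤ 1) (hp : IsStrictPscPtHolder Ω p (k + 2) ε) (i₀ : Fin n) :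
    ∃ Ψ : Cn n ≃L[ℂ] Cn n, ∃ P₂ ∈ homogeneousForms ℝ (Cn n) 2, ∃ P₃ ∈ homogeneousForms ℝ (Cn n) 3,
      (∀ v, v i₀ = 0 → (P₂ v + P₂ (Complex.I • v)) / 2 = tangentialNormSq i₀ v) ∧
      (fun z ↦ (Ψ (z - p) i₀).re - P₂ (Ψ (z - p)) - P₃ (Ψ (z - p))) =O[𝓝[frontier Ω] p]
        fun z ↦ ‖Ψ (z - p)‖ ^ (2 + (k + ε)) := by
  obtain ⟨hpΩ, W, hW, hpW, ρ, hρW, ⟨C, hC⟩, hΩ, hgrad, hlevi⟩ := hp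
  have hρ : ContDiffAt ℝ 2 ρ p :=
    (hρW.contDiffAt (hW.mem_nhds hpW)).of_le (mod_cast Nat.le_add_left 2 k)
  have zero {z : Cn n} (hz : z ∈ frontier Ω) (hzW : z ∈ W) : ρ z = 0 :=
    eq_zero_of_mem_frontier hW hρW.continuousOn hΩ hz hzW
  obtain ⟨Ψ, hΨ, hΨlevi⟩ := exists_levi_coordinates hρ (hgrad p ⟨hpΩ, hpW⟩)
    (hlevi p ⟨hpΩ, hpW⟩) i₀
  rw [Real.toNNReal_of_nonneg hε.1] at hC
  obtain ⟨P, hP, htaylor⟩ := exists_cubic_taylor_of_contDiffPointwiseHolderAt (α := ⟨ε, hε⟩) hk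
    (.of_contDiffOn_holderOnWith hρW (hW.mem_nhds hpW) hC)
  let A : Cn n →L[ℝ] Cn n := (Ψ.symm : Cn n →L[ℂ] Cn n).restrictScalars ℝ
  refine ⟨Ψ, _, comp_clm_mem_homogeneousForms (Submodule.smul_mem _ (2⁻¹ : ℝ)
    (diagonal_mem_homogeneousForms (iteratedFDeriv ℝ 2 ρ p))) A, _,
    comp_clm_mem_homogeneousForms hP A, fun v hv ↦ ?_, ?_⟩
  · have hlevi_v := hΨlevi (Ψ.symm v) (by simpa using hv)
    rw [leviForm_eq_iteratedFDeriv hρ, Ψ.apply_symm_apply] at hlevi_v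
    simp [A, ← hlevi_v]
    ring
  · have tendsto_sub : Tendsto (· - p) (𝓝[frontier Ω] p) (𝓝 0) := by
      simpa using tendsto_nhdsWithin_of_tendsto_nhds ((continuous_sub_right p).tendsto p)
    have norm_le : (fun z ↦ ‖z - p‖ ^ (2 + (k + ε))) =O[𝓝[frontier Ω] p]
        fun z ↦ ‖Ψ (z - p)‖ ^ (2 + (k + ε)) :=
      (Ψ.isBigO_comp_rev _ _).norm_norm.rpow (by linarith [hε.1, k.cast_nonneg (α := ℝ)])
        (.of_forall fun z ↦ norm_nonneg _)
    refine ((htaylor.comp_tendsto tendsto_sub).congr' ?_ .rfl).trans norm_le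
    filter_upwards [self_mem_nhdsWithin, mem_nhdsWithin_of_mem_nhds (hW.mem_nhds hpW)]
      with z hz hzW
    simp [zero hz hzW, zero hpΩ hpW, hΨ, A]
    ring

theorem boundary_sphere_approximation_general {Ω : Set (Cn n)} {ε : ℝ} (hε : ε ∈ Icc (0 : ℝ) 1)
    {k : ℕ} (hk : k ≤ 1) (hp : IsStrictPscPtHolder Ω p (k + 2) ε) (i₀ : Fin n) :
    ∃ (U : Set (Cn n)) (Φ : Cn n → Cn n) (C : ℝ), IsOpen U ∧ p ∈ U ∧ 0 < C ∧
      InjOn Φ U ∧ DifferentiableOn ℂ Φ U ∧ Φ p = 0 ∧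
      ∀ ζ ∈ Φ '' (frontier Ω ∩ U), |(ζ i₀).re - tangentialNormSq i₀ ζ| ≤
        C * (√(tangentialNormSq i₀ ζ) ^ (2 + (k + ε)) + |(ζ i₀).im| ^ (2 + (k + ε))) := by
  obtain ⟨Ψ, P₂, hP₂, P₃, hP₃, hlevi, heq⟩ := exists_cubic_boundary_equation hε hk hp i₀
  let A (z : Cn n) : Cn n := Ψ (z - p)
  have hA : Differentiable ℂ A := Ψ.differentiable.comp (differentiable_id.sub_const p)
  have hAp : A p = 0 := by simp [A]
  have htendsto : Tendsto A (𝓝[frontier Ω] p) (𝓝 0) :=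
    tendsto_nhdsWithin_of_tendsto_nhds (hAp ▸ hA.continuous.tendsto p)
  have hk' : (k : ℝ) ≤ 1 := mod_cast hk
  obtain ⟨Φ, hΦ, hΦ0, ⟨V, hV, h0V, hΦV⟩, hbound⟩ := exists_normal_coordinates hP₂ hlevi hP₃
    (l := map A (𝓝[frontier Ω] p)) htendsto
    (q := 2 + (k + ε)) ⟨by linarith [hε.1, k.cast_nonneg (α := ℝ)], by linarith [hε.2]⟩
    (isBigO_map.2 heq)
  obtain ⟨C, hC, hbound⟩ := (isBigO_map.1 hbound).exists_pos
  obtain ⟨N, hN, hpN, hbound⟩ := mem_nhdsWithin.1 hbound.bound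
  refine ⟨A ⁻¹' V ∩ N, Φ ∘ A, C, (hV.preimage hA.continuous).inter hN,
    ⟨by rwa [mem_preimage, hAp], hpN⟩, hC, ?_, (hΦ.comp hA).differentiableOn, by simp [hAp, hΦ0],
    ?_⟩
  · exact hΦV.comp (fun x _ y _ h ↦ by simpa [A] using h) fun z hz ↦ hz.1
  · rintro _ ⟨z, ⟨hz, -, hzN⟩, rfl⟩
    exact (hbound ⟨hzN, hz⟩).trans_eq <| congrArg (C * ·) <| Real.norm_of_nonneg <|
      add_nonneg (Real.rpow_nonneg (Real.sqrt_nonneg _) _) (Real.rpow_nonneg (abs_nonneg _) _)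

end DefiningFunctions

/-- Under assumption (∗), the boundary `∂Ω` is approximated near `p`, to
order `2 + 2ε_k`, by a biholomorphic image of a sphere: in suitable holomorphic coordinates
`ζ = (ζ₁, ζ')`, every boundary point satisfies
`|Re ζ₁ - |ζ'|²| ≤ C(|ζ'|^(2+2ε_k) + |Im ζ₁|^(2+2ε_k))`. -/
theorem boundary_sphere_approximation (n : ℕ) (hn : 0 < n) (ε : ℝ)
    (hε : ε ∈ Set.Ioc (0 : ℝ) 1) (k : ℕ) (hk : k = 0 ∨ k = 1)
    (Ω : Set (Cn n)) (hopen : IsOpen Ω) (hconn : IsConnected Ω) (p : Cn n) (hp : IsStrictPscPtHolder Ω p (k + 2) ε) :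
    ∃ (U : Set (Cn n)) (Φ : Cn n → Cn n) (C : ℝ), IsOpen U ∧ p ∈ U ∧ 0 < C ∧
      Set.InjOn Φ U ∧ DifferentiableOn ℂ Φ U ∧ Φ p = 0 ∧
      ∀ ζ ∈ Φ '' (frontier Ω ∩ U),
        |(ζ (⟨0, hn⟩ : Fin n)).re - (∑ j ∈ Finset.univ.erase (⟨0, hn⟩ : Fin n), ‖ζ j‖ ^ 2)| ≤
          C * (Real.sqrt (∑ j ∈ Finset.univ.erase (⟨0, hn⟩ : Fin n), ‖ζ j‖ ^ 2) ^ (2 + ((k : ℝ) + ε))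
            + |(ζ (⟨0, hn⟩ : Fin n)).im| ^ (2 + ((k : ℝ) + ε))) :=
  boundary_sphere_approximation_general (Ioc_subset_Icc_self hε) (by lia) hp ⟨0, hn⟩

end
end

section
/- Let Ω be a bounded domain in ℂⁿ. Then for every z ∈ Ω and every X ∈ ℂⁿ, σ_Ω(z)·κ_Ω(z;X) ≤ γ_Ω(z;X) ≤ κ_Ω(z;X); in particular, if X ≠ 0 then σ_Ω(z) ≤ γ_Ω(z;X)/κ_Ω(z;X) ≤ 1. -/
open Metric MeasureTheory Set
open scoped NNReal ENNReal

noncomputable section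

variable {n : ℕ}

/-!
Both metrics contract under holomorphic maps, and the Schwarz lemma on discs gives `γ ≤ κ`. If `f`
competes for `σ_Ω(z)` with radius `r`, then `f⁻¹ : r𝔹 → Ω` is holomorphic, so
`r κ_Ω(z; X) ≤ r κ_{r𝔹}(0; f'(z)X) ≤ ‖f'(z)X‖ ≤ γ_𝔹(0; f'(z)X) ≤ γ_Ω(z; X)`.

That `f⁻¹` is holomorphic is Osgood's theorem: an injective holomorphic map between spaces of equal
finite dimension has invertible derivative, proved by induction on the dimension. Slicing by the
level sets of a coordinate of `f`, the derivative is invertible as soon as it is nonzero. So it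
vanishes on the whole zero set of its determinant `J`; if that set were nonempty, it would contain a
piece of a hypersurface, along which `f` would be constant. The hypersurface is found without the
local theory of analytic sets: among the functions vanishing on `{J = 0}`, one has nonzero
derivative at some point of that set, since otherwise all derivatives of `J` would vanish there.
-/

open Filter Topology

/-! ### Holomorphic maps between complex normed spaces -/

section Regularity

variable {E F : Type*} [NormedAddCommGroup E] [NormedSpace ℂ E] [NormedAddCommGroup F]
  [NormedSpace ℂ F] {f : E → F} {U : Set E} {x v : E}

lemma hasDerivAt_comp_add_smul {t : ℂ} (hf : DifferentiableAt ℂ f (x + t • v)) :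
    HasDerivAt (fun ζ : ℂ => f (x + ζ • v)) (fderiv ℂ f (x + t • v) v) t := by
  refine hf.hasFDerivAt.comp_hasDerivAt t ?_
  simpa using ((hasDerivAt_id t).smul_const v).const_add x

lemma norm_fderiv_le_of_norm_le_on_ball {R C : ℝ} (hf : DifferentiableOn ℂ f (ball x R))
    (hR : 0 < R) (hC : ∀ y ∈ ball x R, ‖f y‖ ≤ C) : ‖fderiv ℂ f x‖ ≤ C / R := by
  have hC₀ : 0 ≤ C := (norm_nonneg _).trans (hC x (mem_ball_self hR))
  refine ContinuousLinearMap.opNorm_le_bound _ (by positivity) fun v => ?_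
  rcases eq_or_ne v 0 with rfl | hv
  · simp
  have hv₀ := norm_pos_iff.2 hv
  have hlim : Tendsto (fun ρ : ℝ => C / ρ * ‖v‖) (𝓝[<] R) (𝓝 (C / R * ‖v‖)) :=
    ((tendsto_const_nhds.div tendsto_id hR.ne').mul_const _).mono_left nhdsWithin_le_nhds
  refine ge_of_tendsto hlim ?_
  filter_upwards [Ioo_mem_nhdsLT hR] with ρ ⟨hρ, hρR⟩
  have hmem : ∀ t ∈ closedBall (0 : ℂ) (ρ / ‖v‖), x + t • v ∈ ball x R := fun t ht => by
    rw [mem_closedBall_zero_iff, le_div_iff₀ hv₀] at ht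
    simpa [norm_smul] using ht.trans_lt hρR
  have hderiv : ∀ t ∈ closedBall (0 : ℂ) (ρ / ‖v‖),
      HasDerivAt (fun ζ : ℂ => f (x + ζ • v)) (fderiv ℂ f (x + t • v) v) t := fun t ht =>
    hasDerivAt_comp_add_smul (hf.differentiableAt (isOpen_ball.mem_nhds (hmem t ht)))
  have hcauchy := Complex.norm_deriv_le_of_forall_mem_sphere_norm_le (div_pos hρ hv₀)
    (DifferentiableOn.diffContOnCl_ball (fun t ht =>
      (hderiv t ht).differentiableAt.differentiableWithinAt) subset_rfl)
    fun t ht => hC _ (hmem t (sphere_subset_closedBall ht))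
  rw [(hderiv 0 (mem_closedBall_self (by positivity))).deriv, zero_smul, add_zero] at hcauchy
  rwa [div_mul_eq_mul_div, ← div_div_eq_mul_div]

lemma exists_lipschitzOnWith_ball (hf : DifferentiableOn ℂ f U) (hU : U ∈ 𝓝 x) :
    ∃ C : ℝ≥0, ∃ r > 0, ball x r ⊆ U ∧ LipschitzOnWith C f (ball x r) := by
  have hbound : ∀ᶠ y in 𝓝 x, ‖f y‖ ≤ ‖f x‖ + 1 :=
    ((hf.differentiableAt hU).continuousAt.norm.eventually_lt_const (lt_add_one _)).mono
      fun _ => le_of_lt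
  obtain ⟨r, hr, hrU⟩ := Metric.eventually_nhds_iff_ball.1 (hbound.and hU)
  have hsub : ∀ y ∈ ball x (r / 2), ball y (r / 2) ⊆ ball x r := fun y hy =>
    ball_subset_ball' (by linarith [mem_ball.1 hy])
  have hfr : DifferentiableOn ℂ f (ball x r) := hf.mono fun y hy => (hrU y hy).2
  refine ⟨((‖f x‖ + 1) / (r / 2)).toNNReal, r / 2, half_pos hr,
    fun y hy => (hrU y (ball_subset_ball (half_le_self hr.le) hy)).2,
    Convex.lipschitzOnWith_of_nnnorm_fderiv_le (𝕜 := ℂ) (fun y hy => ?_) (fun y hy => ?_)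
      (convex_ball x (r / 2))⟩
  · exact hfr.differentiableAt
      (isOpen_ball.mem_nhds (ball_subset_ball (half_le_self hr.le) hy))
  · rw [← norm_toNNReal]
    exact Real.toNNReal_le_toNNReal (norm_fderiv_le_of_norm_le_on_ball (hfr.mono (hsub y hy))
      (half_pos hr) fun w hw => (hrU w (hsub y hy hw)).1)

/- Cauchy's estimate for `w ↦ f (w + (b - a)) - f w`, which is `O(‖b - a‖)`. -/
lemma exists_lipschitzOnWith_ball_fderiv (hf : DifferentiableOn ℂ f U) (hU : U ∈ 𝓝 x) :
    ∃ K : ℝ≥0, ∃ r > 0, ball x r ⊆ U ∧ LipschitzOnWith K (fderiv ℂ f) (ball x r) := by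
  obtain ⟨C, r, hr, hrU, hlip⟩ := exists_lipschitzOnWith_ball hf hU
  have hdiff : ∀ y ∈ ball x r, DifferentiableAt ℂ f y := fun y hy =>
    (hf.mono hrU).differentiableAt (isOpen_ball.mem_nhds hy)
  refine ⟨C / (r / 4).toNNReal, r / 4, by positivity,
    (ball_subset_ball (by linarith)).trans hrU, LipschitzOnWith.of_dist_le_mul fun b hb a ha => ?_⟩
  have hmem : ∀ w ∈ ball a (r / 4), w ∈ ball x r ∧ w + (b - a) ∈ ball x r := by
    intro w hw
    have hshift : dist (w + (b - a)) b = dist w a := by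
      rw [dist_eq_norm, dist_eq_norm]
      congr 1
      abel
    rw [mem_ball] at ha hb hw ⊢
    rw [mem_ball]
    exact ⟨by linarith [dist_triangle w a x],
      by linarith [dist_triangle (w + (b - a)) b x]⟩
  have hshift : ∀ w ∈ ball a (r / 4), DifferentiableAt ℂ (fun w => f (w + (b - a))) w :=
    fun w hw => (hdiff _ (hmem w hw).2).comp w (differentiableAt_id.add_const _)
  have hest := norm_fderiv_le_of_norm_le_on_ball (f := fun w => f (w + (b - a)) - f w)
    (C := C * dist b a)
    (fun w hw => ((hshift w hw).sub (hdiff w (hmem w hw).1)).differentiableWithinAt)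
    (by positivity : 0 < r / 4) fun w hw => by
      simpa [dist_eq_norm] using hlip.dist_le_mul _ (hmem w hw).2 w (hmem w hw).1
  have ha' : a ∈ ball a (r / 4) := mem_ball_self (by positivity)
  rw [fderiv_fun_sub (hshift a ha') (hdiff a (hmem a ha').1), fderiv_comp_add_right,
    add_sub_cancel, ← dist_eq_norm] at hest
  refine hest.trans_eq ?_
  rw [NNReal.coe_div, Real.coe_toNNReal _ (by positivity), mul_div_right_comm]

lemma continuousAt_fderiv_of_differentiableOn (hf : DifferentiableOn ℂ f U) (hU : U ∈ 𝓝 x) :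
    ContinuousAt (fderiv ℂ f) x := by
  obtain ⟨K, r, hr, -, hlip⟩ := exists_lipschitzOnWith_ball_fderiv hf hU
  exact hlip.continuousOn.continuousAt (ball_mem_nhds x hr)

lemma contDiffAt_one_of_differentiableOn (hf : DifferentiableOn ℂ f U) (hU : U ∈ 𝓝 x) :
    ContDiffAt ℂ 1 f x := by
  obtain ⟨V, hVU, hV, hxV⟩ := _root_.mem_nhds_iff.1 hU
  have hfV := hf.mono hVU
  exact contDiffAt_one_iff.2 ⟨fderiv ℂ f, V, hV.mem_nhds hxV,
    fun y hy => (continuousAt_fderiv_of_differentiableOn hfV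
      (hV.mem_nhds hy)).continuousWithinAt,
    fun y hy => (hfV.differentiableAt (hV.mem_nhds hy)).hasFDerivAt⟩

lemma hasStrictFDerivAt_of_differentiableOn (hf : DifferentiableOn ℂ f U) (hU : U ∈ 𝓝 x) :
    HasStrictFDerivAt f (fderiv ℂ f x) x :=
  (contDiffAt_one_of_differentiableOn hf hU).hasStrictFDerivAt one_ne_zero

theorem differentiableAt_of_tendstoUniformlyOn_ball [CompleteSpace F] {ι : Type*} {l : Filter ι}
    [l.NeBot] {D : ι → E → F} {g : E → F} {r : ℝ} (hr : 0 < r)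
    (hD : ∀ᶠ i in l, DifferentiableOn ℂ (D i) (ball x r))
    (hlim : TendstoUniformlyOn D g l (ball x r)) : DifferentiableAt ℂ g x := by
  have hsub : ∀ y ∈ ball x (r / 2), ball y (r / 2) ⊆ ball x r := fun y hy =>
    ball_subset_ball' (by linarith [mem_ball.1 hy])
  have hmem : ∀ y ∈ ball x (r / 2), y ∈ ball x r := fun y hy =>
    ball_subset_ball (half_le_self hr.le) hy
  have hcauchy : UniformCauchySeqOn (fun i => fderiv ℂ (D i)) l (ball x (r / 2)) := by
    intro u hu
    obtain ⟨ε, hε, hεu⟩ := Metric.mem_uniformity_dist.1 hu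
    have hclose := hlim.uniformCauchySeqOn _
      (Metric.dist_mem_uniformity (by positivity : 0 < ε * r / 4))
    filter_upwards [hclose, hD.prod_mk hD] with ⟨i, j⟩ hij ⟨hi, hj⟩ y hy
    have hest := norm_fderiv_le_of_norm_le_on_ball (f := fun w => D i w - D j w)
      ((hi.sub hj).mono (hsub y hy)) (half_pos hr) fun w hw => by
        simpa [dist_eq_norm] using (hij w (hsub y hy hw)).le
    rw [fderiv_fun_sub (hi.differentiableAt (isOpen_ball.mem_nhds (hmem y hy)))
      (hj.differentiableAt (isOpen_ball.mem_nhds (hmem y hy))), ← dist_eq_norm] at hest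
    refine hεu (hest.trans_lt ?_)
    calc ε * r / 4 / (r / 2) = ε / 2 := by field_simp; norm_num
      _ < ε := half_lt_self hε
  choose! g' hg' using fun y hy => CompleteSpace.complete (hcauchy.cauchy_map (x := y) hy)
  refine (hasFDerivAt_of_tendstoUniformlyOnFilter (f := D) (g' := g')
    ((tendstoUniformlyOn_iff_tendstoUniformlyOnFilter.1
      (hcauchy.tendstoUniformlyOn_of_tendsto hg')).mono_right
        (le_principal_iff.2 (ball_mem_nhds x (half_pos hr)))) ?_ ?_).differentiableAt
  · filter_upwards [hD.prod_mk (ball_mem_nhds x hr)] with ⟨i, y⟩ ⟨hi, hy⟩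
    exact (hi.differentiableAt (isOpen_ball.mem_nhds hy)).hasFDerivAt
  · filter_upwards [ball_mem_nhds x hr] with y hy using hlim.tendsto_at hy

lemma norm_sub_sub_fderiv_le_of_lipschitzOnWith_fderiv {s : Set E} {K : ℝ≥0} {w : E}
    (hf : ∀ y ∈ s, DifferentiableAt ℂ f y) (hlip : LipschitzOnWith K (fderiv ℂ f) s)
    (hs : closedBall x ‖w‖ ⊆ s) : ‖f (x + w) - f x - fderiv ℂ f x w‖ ≤ K * ‖w‖ ^ 2 := by
  have hx : x ∈ closedBall x ‖w‖ := mem_closedBall_self (norm_nonneg _)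
  have hmvt := Convex.norm_image_sub_le_of_norm_fderiv_le' (𝕜 := ℂ) (φ := fderiv ℂ f x)
    (C := K * ‖w‖) (y := x + w) (fun y hy => hf y (hs hy))
    (fun y hy => by
      rw [← dist_eq_norm]
      exact (hlip.dist_le_mul y (hs hy) x (hs hx)).trans (by gcongr; exact hy))
    (convex_closedBall x ‖w‖) hx (by simp)
  rwa [add_sub_cancel_left, mul_assoc, ← sq] at hmvt

lemma eventually_norm_smul_lt (v : E) {δ : ℝ} (hδ : 0 < δ) :
    ∀ᶠ t : ℂ in 𝓝 0, ‖t • v‖ < δ :=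
  (show ContinuousAt (fun t : ℂ => ‖t • v‖) 0 by fun_prop).eventually_lt_const (by simpa)

lemma exists_tendstoUniformlyOn_ball_slope (hf : DifferentiableOn ℂ f U) (hU : U ∈ 𝓝 x)
    (v : E) : ∃ r > 0, ball x (2 * r) ⊆ U ∧
      TendstoUniformlyOn (fun (t : ℂ) y => t⁻¹ • (f (y + t • v) - f y))
        (fun y => fderiv ℂ f y v) (𝓝[≠] 0) (ball x r) := by
  obtain ⟨K, r, hr, hrU, hlip⟩ := exists_lipschitzOnWith_ball_fderiv hf hU
  refine ⟨r / 2, half_pos hr, by rwa [mul_div_cancel₀ r two_ne_zero], ?_⟩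
  rw [Metric.tendstoUniformlyOn_iff]
  intro ε hε
  have hKv : 0 < K * ‖v‖ + 1 := by positivity
  filter_upwards [nhdsWithin_le_nhds (eventually_norm_smul_lt v (half_pos hr)),
    nhdsWithin_le_nhds (eventually_norm_smul_lt v (div_pos hε hKv)), self_mem_nhdsWithin]
    with t htr htε (ht : t ≠ 0) y hy
  have htaylor := norm_sub_sub_fderiv_le_of_lipschitzOnWith_fderiv (x := y) (w := t • v)
    (fun w hw => (hf.mono hrU).differentiableAt (isOpen_ball.mem_nhds hw)) hlip
    (closedBall_subset_ball' (by linarith [mem_ball.1 hy]))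
  have hfactor : fderiv ℂ f y v - t⁻¹ • (f (y + t • v) - f y) =
      -(t⁻¹ • (f (y + t • v) - f y - fderiv ℂ f y (t • v))) := by
    rw [map_smul, smul_sub t⁻¹ (f (y + t • v) - f y), inv_smul_smul₀ ht, neg_sub]
  calc dist (fderiv ℂ f y v) (t⁻¹ • (f (y + t • v) - f y))
      = ‖t‖⁻¹ * ‖f (y + t • v) - f y - fderiv ℂ f y (t • v)‖ := by
        rw [dist_eq_norm, hfactor, norm_neg, norm_smul, norm_inv]
    _ ≤ ‖t‖⁻¹ * (K * ‖t • v‖ ^ 2) := by gcongr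
    _ = K * ‖v‖ * ‖t • v‖ := by
        rw [norm_smul]
        field_simp
    _ ≤ (K * ‖v‖ + 1) * ‖t • v‖ := by gcongr; exact le_add_of_nonneg_right zero_le_one
    _ < ε := by rwa [lt_div_iff₀' hKv] at htε

theorem differentiableOn_fderiv_apply [CompleteSpace F] (hf : DifferentiableOn ℂ f U)
    (hU : IsOpen U) (v : E) : DifferentiableOn ℂ (fun x => fderiv ℂ f x v) U := by
  intro x hx
  obtain ⟨r, hr, hrU, hlim⟩ := exists_tendstoUniformlyOn_ball_slope hf (hU.mem_nhds hx) v
  refine (differentiableAt_of_tendstoUniformlyOn_ball hr ?_ hlim).differentiableWithinAt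
  filter_upwards [nhdsWithin_le_nhds (eventually_norm_smul_lt v hr)] with t ht
  have hdiff : ∀ y ∈ ball x (2 * r), DifferentiableAt ℂ f y := fun y hy =>
    (hf.mono hrU).differentiableAt (isOpen_ball.mem_nhds hy)
  intro y hy
  have hy₁ : y ∈ ball x (2 * r) := ball_subset_ball (by linarith) hy
  have hy₂ : y + t • v ∈ ball x (2 * r) := by
    rw [mem_ball, dist_eq_norm] at *
    calc ‖y + t • v - x‖ = ‖(y - x) + t • v‖ := by rw [add_sub_right_comm]
      _ ≤ ‖y - x‖ + ‖t • v‖ := norm_add_le _ _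
      _ < 2 * r := by linarith
  exact ((((hdiff _ hy₂).comp y (differentiableAt_id.add_const _)).sub
    (hdiff y hy₁)).const_smul t⁻¹).differentiableWithinAt

end Regularity

/-! ### Injectivity and Hurwitz's theorem -/

section InjectiveMaps

variable {E F : Type*} [NormedAddCommGroup E] [NormedSpace ℂ E] [NormedAddCommGroup F]
  [NormedSpace ℂ F]

lemma frequently_fderiv_ne_zero_of_injOn [Nontrivial E] {f : E → F} {U : Set E} {z : E}
    (hf : DifferentiableOn ℂ f U) (hU : U ∈ 𝓝 z) (hinj : InjOn f U) :
    ∃ᶠ x in 𝓝 z, fderiv ℂ f x ≠ 0 := by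
  intro hzero
  obtain ⟨r, hr, hball⟩ := Metric.eventually_nhds_iff_ball.1
    ((hzero.mono fun _ => not_not.1).and hU)
  obtain ⟨w, hw⟩ := exists_ne (0 : E)
  have hnear : ∀ᶠ t : ℂ in 𝓝[≠] 0, ‖t • w‖ < r :=
    nhdsWithin_le_nhds (eventually_norm_smul_lt w hr)
  obtain ⟨t, htr, ht⟩ := (hnear.and self_mem_nhdsWithin).exists
  have hmem : z + t • w ∈ ball z r := by simpa using htr
  have hconst := isOpen_ball.is_const_of_fderiv_eq_zero (𝕜 := ℂ)
    (convex_ball z r).isPreconnected (hf.mono fun y hy => (hball y hy).2)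
    (fun y hy => (hball y hy).1) hmem (mem_ball_self hr)
  have heq := hinj (hball _ hmem).2 (mem_of_mem_nhds hU) hconst
  exact smul_ne_zero ht hw (by simpa using heq)

end InjectiveMaps

section Hurwitz

lemma exists_eq_zero_of_norm_center_lt {g : ℂ → ℂ} {c : ℂ} {r m : ℝ} (hr : 0 < r)
    (hg : DiffContOnCl ℂ g (ball c r)) (hc : ‖g c‖ < m) (hm : ∀ ζ ∈ sphere c r, m ≤ ‖g ζ‖) :
    ∃ ζ ∈ closedBall c r, g ζ = 0 := by
  by_contra! hne
  have hm₀ : 0 < m := (norm_nonneg _).trans_lt hc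
  rw [← closure_ball c hr.ne'] at hne
  have hmax := Complex.norm_le_of_forall_mem_frontier_norm_le isBounded_ball (hg.inv hne)
    (C := m⁻¹) (fun ζ hζ => by
      rw [frontier_ball c hr.ne'] at hζ
      rw [Pi.inv_apply, norm_inv]
      exact inv_anti₀ hm₀ (hm ζ hζ)) (subset_closure (mem_ball_self hr))
  rw [Pi.inv_apply, norm_inv, inv_le_inv₀
    (norm_pos_iff.2 (hne c (subset_closure (mem_ball_self hr)))) hm₀] at hmax
  exact hmax.not_gt hc

theorem eventually_exists_eq_zero_of_tendsto_center {X : Type*} [TopologicalSpace X]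
    {G : X → ℂ → ℂ} {x₀ : X} {c : ℂ} {r : ℝ} (hr : 0 < r)
    (hdiff : ∀ᶠ x in 𝓝 x₀, DiffContOnCl ℂ (G x) (ball c r))
    (hcont : ∀ ζ ∈ sphere c r, ContinuousAt (fun p : X × ℂ => G p.1 p.2) (x₀, ζ))
    (hne : ∀ ζ ∈ sphere c r, G x₀ ζ ≠ 0) (hzero : Tendsto (fun x => G x c) (𝓝 x₀) (𝓝 0)) :
    ∀ᶠ x in 𝓝 x₀, ∃ ζ ∈ closedBall c r, G x ζ = 0 := by
  obtain ⟨m, hm₀, hm⟩ : ∃ m > 0, ∀ ζ ∈ sphere c r, m < ‖G x₀ ζ‖ := by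
    have hcont₀ : ContinuousOn (fun ζ => ‖G x₀ ζ‖) (sphere c r) := fun ζ hζ =>
      ((hcont ζ hζ).comp (f := fun ζ => (x₀, ζ))
        (by fun_prop)).norm.continuousWithinAt
    obtain ⟨ζ₀, hζ₀, hmin⟩ := (isCompact_sphere c r).exists_isMinOn
      (NormedSpace.sphere_nonempty.2 hr.le) hcont₀
    have hpos := norm_pos_iff.2 (hne ζ₀ hζ₀)
    exact ⟨‖G x₀ ζ₀‖ / 2, half_pos hpos, fun ζ hζ => (half_lt_self hpos).trans_le (hmin hζ)⟩
  have hsphere : ∀ᶠ x in 𝓝 x₀, ∀ ζ ∈ sphere c r, m < ‖G x ζ‖ :=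
    (isCompact_sphere c r).eventually_forall_of_forall_eventually fun ζ hζ =>
      (hcont ζ hζ).norm.eventually_const_lt (hm ζ hζ)
  have hcenter : ∀ᶠ x in 𝓝 x₀, ‖G x c‖ < m :=
    hzero.norm.eventually_lt_const (by simpa using hm₀)
  filter_upwards [hdiff, hsphere, hcenter] with x hx hxs hxc
  exact exists_eq_zero_of_norm_center_lt hr hx hxc fun ζ hζ => (hxs ζ hζ).le

lemma dslope_comm {𝕜 E : Type*} [NontriviallyNormedField 𝕜] [NormedAddCommGroup E]
    [NormedSpace 𝕜 E] (f : 𝕜 → E) (a b : 𝕜) : dslope f a b = dslope f b a := by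
  rcases eq_or_ne a b with rfl | hab
  · rfl
  · rw [dslope_of_ne f hab.symm, dslope_of_ne f hab, slope_comm]

lemma continuousAt_dslope_prod_of_ne {𝕜 E : Type*} [NontriviallyNormedField 𝕜]
    [NormedAddCommGroup E] [NormedSpace 𝕜 E] {f : 𝕜 → E} {a b : 𝕜} (hab : b ≠ a)
    (ha : ContinuousAt f a) (hb : ContinuousAt f b) :
    ContinuousAt (fun p : 𝕜 × 𝕜 => dslope f p.1 p.2) (a, b) := by
  have hslope : ContinuousAt (fun p : 𝕜 × 𝕜 => (p.2 - p.1)⁻¹ • (f p.2 - f p.1)) (a, b) :=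
    ((continuousAt_snd.sub continuousAt_fst).inv₀ (sub_ne_zero.2 hab)).smul
      ((hb.comp continuousAt_snd).sub (ha.comp continuousAt_fst))
  refine hslope.congr ?_
  filter_upwards [(isOpen_ne_fun continuous_snd continuous_fst).mem_nhds hab]
    with p (hp : p.2 ≠ p.1)
  rw [dslope_of_ne f hp, slope_def_module]

/- Otherwise, for `s` near `z`, Hurwitz gives `dslope f s` a zero near `z`; by injectivity this
zero can only be `s`, so `deriv f s = 0` for all `s` near `z`. -/
theorem deriv_ne_zero_of_injOn {f : ℂ → ℂ} {U : Set ℂ} {z : ℂ} (hf : DifferentiableOn ℂ f U)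
    (hU : IsOpen U) (hz : z ∈ U) (hinj : InjOn f U) : deriv f z ≠ 0 := by
  intro hfz
  have hdiff : ∀ s ∈ U, DifferentiableAt ℂ f s := fun s hs => hf.differentiableAt (hU.mem_nhds hs)
  obtain ⟨r, hr, hrU⟩ := nhds_basis_closedBall.mem_iff.1 (hU.mem_nhds hz)
  have hne : ∀ {s ζ}, s ∈ U → ζ ∈ U → ζ ≠ s → dslope f s ζ ≠ 0 := by
    intro s ζ hs hζ hζs h
    rw [dslope_of_ne f hζs, slope_def_field, div_eq_zero_iff, sub_eq_zero, sub_eq_zero] at h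
    exact hζs (h.elim (hinj hζ hs) id)
  have hcont : ∀ ζ ∈ sphere z r,
      ContinuousAt (fun p : ℂ × ℂ => dslope f p.1 p.2) (z, ζ) := fun ζ hζ =>
    continuousAt_dslope_prod_of_ne (ne_of_mem_sphere hζ hr.ne') (hdiff z hz).continuousAt
      (hdiff ζ (hrU (sphere_subset_closedBall hζ))).continuousAt
  have hzeros : ∀ᶠ s in 𝓝 z, ∃ ζ ∈ closedBall z r, dslope f s ζ = 0 := by
    refine eventually_exists_eq_zero_of_tendsto_center hr ?_ hcont
      (fun ζ hζ => hne hz (hrU (sphere_subset_closedBall hζ))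
        (ne_of_mem_sphere hζ hr.ne')) ?_
    · filter_upwards [hU.mem_nhds hz] with s hs
      exact (((Complex.differentiableOn_dslope (hU.mem_nhds hs)).2 hf).mono
        hrU).diffContOnCl_ball subset_rfl
    · rw [← hfz, ← dslope_same, funext fun s => dslope_comm f s z]
      exact continuousAt_dslope_same.2 (hdiff z hz)
  refine frequently_fderiv_ne_zero_of_injOn hf (hU.mem_nhds hz) hinj ?_
  filter_upwards [hzeros, hU.mem_nhds hz] with s ⟨ζ, hζ, hs⟩ hsU
  obtain rfl : ζ = s := by
    by_contra h
    exact hne hsU (hrU hζ) h hs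
  rw [dslope_same, ← fderiv_apply_one_eq_deriv] at hs
  exact not_not.2 (ContinuousLinearMap.ext_ring hs)

end Hurwitz

/-! ### Level sets -/

section LevelSets

variable {E F G : Type*} [NormedAddCommGroup E] [NormedSpace ℂ E] [NormedAddCommGroup F]
  [NormedSpace ℂ F] [NormedAddCommGroup G] [NormedSpace ℂ G] {U : Set E} {z : E}

lemma contDiffAt_implicitFunctionOfComplemented [CompleteSpace E] [CompleteSpace G] {φ : E → G}
    {φ' : E →L[ℂ] G} (hφ : ContDiffAt ℂ 1 φ z) (hstrict : HasStrictFDerivAt φ φ' z)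
    (hsurj : φ'.range = ⊤) (hker : φ'.ker.ClosedComplemented) :
    ContDiffAt ℂ 1 (hstrict.implicitFunctionOfComplemented φ φ' hsurj hker (φ z)) 0 := by
  let ψ := HasStrictFDerivAt.implicitFunctionDataOfComplemented φ φ' hstrict hsurj hker
  have hpt : ψ.prodFun ψ.pt = (φ z, 0) :=
    hstrict.implicitToOpenPartialHomeomorphOfComplemented_self hsurj hker
  have hψ : ContDiffAt ℂ 1 ψ.implicitFunction.uncurry (φ z, 0) := by
    rw [← hpt]
    exact ψ.contDiffAt_implicitFunction hφ
      ((Classical.choose hker).contDiff.comp (contDiff_id.sub contDiff_const)).contDiffAt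
      one_ne_zero
  exact hψ.comp 0 (contDiffAt_const.prodMk contDiffAt_id)

theorem exists_parametrization_levelSet [CompleteSpace E] [FiniteDimensional ℂ G] {φ : E → G}
    {φ' : E →L[ℂ] G} (hφ : DifferentiableOn ℂ φ U) (hU : U ∈ 𝓝 z) (hφ' : HasFDerivAt φ φ' z)
    (hsurj : φ'.range = ⊤) :
    ∃ (W : Set φ'.ker) (g : φ'.ker → E), IsOpen W ∧ 0 ∈ W ∧ DifferentiableOn ℂ g W ∧ InjOn g W ∧
      MapsTo g W (U ∩ φ ⁻¹' {φ z}) ∧ g 0 = z ∧ HasFDerivAt g φ'.ker.subtypeL 0 := by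
  have : CompleteSpace G := FiniteDimensional.complete ℂ G
  have hstrict : HasStrictFDerivAt φ φ' z :=
    hφ'.fderiv ▸ hasStrictFDerivAt_of_differentiableOn hφ hU
  have hker : φ'.ker.ClosedComplemented :=
    ContinuousLinearMap.ker_closedComplemented_of_finiteDimensional_range φ'
  let Φ := hstrict.implicitToOpenPartialHomeomorphOfComplemented φ φ' hsurj hker
  let g := hstrict.implicitFunctionOfComplemented φ φ' hsurj hker (φ z)
  have hg₀ : g 0 = z := hstrict.implicitFunctionOfComplemented_apply_image hsurj hker
  have hg' : HasStrictFDerivAt g φ'.ker.subtypeL 0 :=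
    hstrict.to_implicitFunctionOfComplemented hsurj hker
  have hright : ∀ᶠ k in 𝓝 0, Φ (g k) = (φ z, k) :=
    (Continuous.prodMk_right (φ z)).continuousAt.eventually
      (Φ.eventually_right_inverse (hstrict.mem_implicitToOpenPartialHomeomorphOfComplemented_target
        hsurj hker))
  have hdiff : ∀ᶠ k in 𝓝 0, DifferentiableAt ℂ g k :=
    ((contDiffAt_implicitFunctionOfComplemented (contDiffAt_one_of_differentiableOn hφ hU) hstrict
      hsurj hker).eventually (by simp)).mono fun k hk => hk.differentiableAt one_ne_zero
  have hmem : ∀ᶠ k in 𝓝 0, g k ∈ U := hg'.continuousAt.eventually (by rwa [hg₀])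
  obtain ⟨W, hW, hWo, hW₀⟩ := _root_.eventually_nhds_iff.1 (hright.and (hdiff.and hmem))
  refine ⟨W, g, hWo, hW₀, fun k hk => (hW k hk).2.1.differentiableWithinAt, ?_,
    fun k hk => ⟨(hW k hk).2.2, congrArg Prod.fst (hW k hk).1⟩, hg₀, hg'.hasFDerivAt⟩
  intro k hk k' hk' hkk'
  have hpair := (hW k hk).1.symm.trans ((congrArg Φ hkk').trans (hW k' hk').1)
  exact congrArg Prod.snd hpair

lemma exists_injOn_slice [CompleteSpace E] {f : E → F} (hf : DifferentiableOn ℂ f U)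
    (hU : U ∈ 𝓝 z) (hinj : InjOn f U) {ℓ : F →L[ℂ] ℂ} (hℓ : ℓ ∘L fderiv ℂ f z ≠ 0) :
    ∃ (W : Set (ℓ ∘L fderiv ℂ f z).ker) (G : (ℓ ∘L fderiv ℂ f z).ker → ℓ.ker), IsOpen W ∧
      0 ∈ W ∧ DifferentiableOn ℂ G W ∧ InjOn G W ∧ ∀ k, (fderiv ℂ G 0 k : F) = fderiv ℂ f z k := by
  have hfz := (hf.differentiableAt hU).hasFDerivAt
  obtain ⟨W, g, hWo, hW₀, hg, hginj, hgU, hg₀, hg'⟩ :=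
    exists_parametrization_levelSet (ℓ.differentiable.comp_differentiableOn hf) hU
      (ℓ.hasFDerivAt.comp z hfz)
      (Module.Dual.range_eq_top_of_ne_zero fun h =>
        hℓ (ContinuousLinearMap.coe_injective h))
  obtain ⟨q, hq⟩ : ℓ.ker.ClosedComplemented :=
    ContinuousLinearMap.ker_closedComplemented_of_finiteDimensional_range ℓ
  have hdiff : ∀ k ∈ W, f (g k) - f z ∈ ℓ.ker := fun k hk => by
    simpa [sub_eq_zero] using (hgU hk).2
  have hG : ∀ k ∈ W, (q (f (g k) - f z) : F) = f (g k) - f z := fun k hk =>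
    congrArg Subtype.val (hq ⟨_, hdiff k hk⟩)
  refine ⟨W, fun k => q (f (g k) - f z), hWo, hW₀,
    q.differentiable.comp_differentiableOn
      (((hf.comp hg fun k hk => (hgU hk).1)).sub_const _), ?_, fun k => ?_⟩
  · intro k hk k' hk' hkk'
    have hval := congrArg Subtype.val hkk'
    simp only [hG k hk, hG k' hk', sub_left_inj] at hval
    exact hginj hk hk' (hinj (hgU hk).1 (hgU hk').1 hval)
  · have hfg : HasFDerivAt f (fderiv ℂ f z) (g 0) := by rwa [hg₀]
    have hderiv := q.hasFDerivAt.comp 0 ((hfg.comp 0 hg').sub_const (f z))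
    rw [show (fun k => q (f (g k) - f z)) = q ∘ fun k => (f ∘ g) k - f z from rfl, hderiv.fderiv]
    exact congrArg Subtype.val (hq ⟨fderiv ℂ f z k, k.2⟩)

end LevelSets

/-! ### Zero sets of holomorphic functions -/

section ZeroSets

variable {E F : Type*} [NormedAddCommGroup E] [NormedSpace ℂ E] [NormedAddCommGroup F]
  [NormedSpace ℂ F] {U : Set E} {z : E}

lemma differentiableOn_iterate_fderiv_apply [CompleteSpace F] {f : E → F}
    (hf : DifferentiableOn ℂ f U) (hU : IsOpen U) (v : E) (k : ℕ) :
    DifferentiableOn ℂ ((fun (h : E → F) x => fderiv ℂ h x v)^[k] f) U := by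
  induction k with
  | zero => exact hf
  | succ k ih =>
    rw [Function.iterate_succ_apply']
    exact differentiableOn_fderiv_apply ih hU v

lemma iteratedDeriv_comp_add_smul [CompleteSpace F] {f : E → F} (hf : DifferentiableOn ℂ f U)
    (hU : IsOpen U) {v : E} {k : ℕ} {t : ℂ} (ht : z + t • v ∈ U) :
    iteratedDeriv k (fun ζ : ℂ => f (z + ζ • v)) t =
      (fun (h : E → F) x => fderiv ℂ h x v)^[k] f (z + t • v) := by
  induction k generalizing t with
  | zero => rfl
  | succ k ih =>
    have hnear : ∀ᶠ s : ℂ in 𝓝 t, z + s • v ∈ U :=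
      ContinuousAt.eventually_mem (by fun_prop) (hU.mem_nhds ht)
    rw [iteratedDeriv_succ, EventuallyEq.deriv_eq (hnear.mono fun s hs => ih hs),
      Function.iterate_succ_apply']
    exact (hasDerivAt_comp_add_smul ((differentiableOn_iterate_fderiv_apply hf hU v
      k).differentiableAt (hU.mem_nhds ht))).deriv

theorem eventually_eq_zero_of_iterate_fderiv_eq_zero [CompleteSpace F] {f : E → F}
    (hf : DifferentiableOn ℂ f U) (hU : IsOpen U) (hz : z ∈ U)
    (hzero : ∀ (k : ℕ) (v : E), (fun (h : E → F) x => fderiv ℂ h x v)^[k] f z = 0) :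
    ∀ᶠ x in 𝓝 z, f x = 0 := by
  obtain ⟨r, hr, hrU⟩ := Metric.isOpen_iff.1 hU z hz
  filter_upwards [ball_mem_nhds z hr] with x hx
  let T : Set ℂ := (fun t => z + t • (x - z)) ⁻¹' ball z r
  have hTo : IsOpen T := isOpen_ball.preimage (by fun_prop)
  have hTc : IsPreconnected T :=
    (((convex_ball z r).translate_preimage_right z).linear_preimage
      ((LinearMap.toSpanSingleton ℂ E (x - z)).restrictScalars ℝ)).isPreconnected
  have hT₀ : (0 : ℂ) ∈ T := by simpa [T] using hr
  have hT₁ : (1 : ℂ) ∈ T := by simpa [T] using hx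
  have han : AnalyticOnNhd ℂ (fun t : ℂ => f (z + t • (x - z))) T :=
    DifferentiableOn.analyticOnNhd (fun t ht => (hasDerivAt_comp_add_smul (hf.differentiableAt
      (hU.mem_nhds (hrU ht)))).differentiableAt.differentiableWithinAt) hTo
  have horder : analyticOrderAt (fun t : ℂ => f (z + t • (x - z))) 0 = ⊤ := by
    refine ENat.eq_top_iff_forall_ge.2 fun m =>
      (natCast_le_analyticOrderAt_iff_iteratedDeriv_eq_zero (han 0 hT₀)).2 fun i _ => ?_
    rw [iteratedDeriv_comp_add_smul hf hU (hrU hT₀), zero_smul, add_zero, hzero]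
  simpa using han.eqOn_zero_of_preconnected_of_eventuallyEq_zero hTc hT₀
    (analyticOrderAt_eq_top.1 horder) hT₁

lemma exists_fderiv_ne_zero_of_frequently_ne_zero [CompleteSpace F] {f : E → F}
    (hf : DifferentiableOn ℂ f U) (hU : IsOpen U) (hz : z ∈ U) (hfz : f z = 0)
    (hne : ∃ᶠ x in 𝓝 z, f x ≠ 0) :
    ∃ h : E → F, DifferentiableOn ℂ h U ∧ (∀ x ∈ U, f x = 0 → h x = 0) ∧
      ∃ p ∈ U, f p = 0 ∧ fderiv ℂ h p ≠ 0 := by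
  by_contra! hcrit
  have hvanish : ∀ (v : E) (k : ℕ), ∀ x ∈ U, f x = 0 →
      (fun (h : E → F) x => fderiv ℂ h x v)^[k] f x = 0 := by
    intro v k
    induction k with
    | zero => exact fun x _ hx => hx
    | succ k ih =>
      intro x hx hfx
      rw [Function.iterate_succ_apply',
        hcrit _ (differentiableOn_iterate_fderiv_apply hf hU v k) ih x hx hfx,
        zero_apply]
  exact hne ((eventually_eq_zero_of_iterate_fderiv_eq_zero hf hU hz fun k v =>
    hvanish v k z hz hfz).mono fun _ => not_not.2)

lemma eventually_eq_of_apply_add_smul_eq {h : E → F} {h' : E →L[ℂ] F} {v : E}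
    (hh : HasStrictFDerivAt h h' z) (hv : h' v ≠ 0) :
    ∀ᶠ q : E × ℂ in 𝓝 (z, 0), h (q.1 + q.2 • v) = h q.1 → q.2 = 0 := by
  have hv₀ : 0 < ‖v‖ := norm_pos_iff.2 fun h₀ => hv (by rw [h₀, map_zero])
  have hlim : Tendsto (fun q : E × ℂ => (q.1 + q.2 • v, q.1)) (𝓝 (z, 0)) (𝓝 (z, z)) :=
    (show Continuous fun q : E × ℂ => (q.1 + q.2 • v, q.1) by fun_prop).tendsto' _ _ (by simp)
  have hc : 0 < ‖h' v‖ / (2 * ‖v‖) := by positivity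
  filter_upwards [hlim.eventually (hh.isLittleO.def hc)] with q hq heq
  have hle : ‖q.2‖ * ‖h' v‖ ≤ ‖q.2‖ * (‖h' v‖ / 2) := by
    calc ‖q.2‖ * ‖h' v‖ = ‖h (q.1 + q.2 • v) - h q.1 - h' (q.1 + q.2 • v - q.1)‖ := by
          rw [heq, sub_self, zero_sub, norm_neg, add_sub_cancel_left, map_smul, norm_smul]
      _ ≤ ‖h' v‖ / (2 * ‖v‖) * ‖q.1 + q.2 • v - q.1‖ := hq
      _ = ‖q.2‖ * (‖h' v‖ / 2) := by
          rw [add_sub_cancel_left, norm_smul]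
          field_simp
  by_contra ht
  exact (half_lt_self (norm_pos_iff.2 hv)).not_ge (le_of_mul_le_mul_left hle (norm_pos_iff.2 ht))

/- Hurwitz on a line transverse to `{h = 0}`: near `p` the function `f` has a zero on the line
through `x`, which lies in `{h = 0}` and hence is `x` itself when `h x = 0`. -/
theorem eventually_eq_zero_of_fderiv_ne_zero {f : E → ℂ} {h : E → F} (hf : DifferentiableOn ℂ f U)
    (hh : DifferentiableOn ℂ h U) (hU : U ∈ 𝓝 z) (hfz : f z = 0)
    (hfh : ∀ x ∈ U, f x = 0 → h x = 0) (hne : fderiv ℂ h z ≠ 0) :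
    ∀ᶠ x in 𝓝 z, h x = 0 → f x = 0 := by
  obtain ⟨v, hv⟩ := DFunLike.ne_iff.1 hne
  have hadd : ContinuousAt (fun q : E × ℂ => q.1 + q.2 • v) (z, 0) := by fun_prop
  have hUo : ∀ᶠ q : E × ℂ in 𝓝 (z, 0), U ∈ 𝓝 (q.1 + q.2 • v) :=
    hadd.eventually (by simpa using eventually_eventually_nhds.2 hU)
  have hnear := hUo.and (eventually_eq_of_apply_add_smul_eq
    (hasStrictFDerivAt_of_differentiableOn hh hU) hv)
  rw [nhds_prod_eq] at hnear
  obtain ⟨P, hP, Q, hQ, hPQ⟩ := eventually_prod_iff.1 hnear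
  obtain ⟨r, hr, hrQ⟩ := nhds_basis_closedBall.mem_iff.1 hQ
  have hline : ∀ {x} {t : ℂ}, P x → t ∈ closedBall 0 r →
      U ∈ 𝓝 (x + t • v) ∧ (h (x + t • v) = h x → t = 0) :=
    fun hx ht => hPQ hx (hrQ ht)
  have hdiff : ∀ {x} {t : ℂ}, P x → t ∈ closedBall 0 r → DifferentiableAt ℂ f (x + t • v) :=
    fun hx ht => hf.differentiableAt (hline hx ht).1
  have hsub : ∀ {t : ℂ}, t ∈ sphere 0 r → t ∈ closedBall 0 r := fun ht =>
    sphere_subset_closedBall ht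
  have hzero : ∀ {x} {t : ℂ}, P x → t ∈ closedBall 0 r → h x = 0 → f (x + t • v) = 0 → t = 0 :=
    fun hx ht hhx hft => (hline hx ht).2
      ((hfh _ (mem_of_mem_nhds (hline hx ht).1) hft).trans hhx.symm)
  have hPz : P z := hP.self_of_nhds
  have hurwitz := eventually_exists_eq_zero_of_tendsto_center (G := fun x t => f (x + t • v))
    (x₀ := z) (c := 0) hr ?_ ?_ ?_ ?_
  · filter_upwards [hurwitz, hP] with x ⟨t, ht, hft⟩ hx hhx
    rw [hzero hx ht hhx hft, zero_smul, add_zero] at hft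
    exact hft
  · filter_upwards [hP] with x hx
    exact DifferentiableOn.diffContOnCl_ball (U := closedBall 0 r) (fun t ht =>
      (hasDerivAt_comp_add_smul (hdiff hx ht)).differentiableAt.differentiableWithinAt) subset_rfl
  · exact fun t ht => (hdiff hPz (hsub ht)).continuousAt.comp
      (f := fun q : E × ℂ => q.1 + q.2 • v) (by fun_prop)
  · exact fun t ht hft => ne_of_mem_sphere ht hr.ne'
      (hzero hPz (hsub ht) (hfh z (mem_of_mem_nhds hU) hfz) hft)
  · simpa [hfz] using (hf.differentiableAt hU).continuousAt.tendsto

lemma exists_differentiableOn_eq_zero_iff_not_injective_fderiv [FiniteDimensional ℂ E]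
    [FiniteDimensional ℂ F] (hEF : Module.finrank ℂ E = Module.finrank ℂ F) {f : E → F}
    (hf : DifferentiableOn ℂ f U) (hU : IsOpen U) :
    ∃ J : E → ℂ, DifferentiableOn ℂ J U ∧ ∀ x, J x = 0 ↔ ¬ Function.Injective (fderiv ℂ f x) := by
  have : CompleteSpace F := FiniteDimensional.complete ℂ F
  let e : F ≃L[ℂ] E := ContinuousLinearEquiv.ofFinrankEq hEF.symm
  let b := Module.finBasis ℂ E
  let L : E → E →ₗ[ℂ] E := fun x => (e : F →L[ℂ] E) ∘L fderiv ℂ f x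
  have hentry : ∀ i j, DifferentiableOn ℂ (fun x => LinearMap.toMatrix b b (L x) i j) U := by
    intro i j
    have hcoord := (LinearMap.toContinuousLinearMap (b.coord i ∘ₗ (e : F →ₗ[ℂ] E))).differentiable
    simpa [LinearMap.toMatrix_apply, L, Function.comp_def] using
      hcoord.comp_differentiableOn (differentiableOn_fderiv_apply hf hU (b j))
  refine ⟨fun x => LinearMap.det (L x), ?_, fun x => ?_⟩
  · simp only [← LinearMap.det_toMatrix b, Matrix.det_apply']
    exact DifferentiableOn.fun_sum fun σ _ => (differentiableOn_const _).mul
      fun x hx => (HasFDerivWithinAt.finsetProd fun i _ =>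
        (hentry (σ i) i x hx).hasFDerivWithinAt).differentiableWithinAt
  · rw [LinearMap.det_eq_zero_iff_ker_ne_bot, Ne, LinearMap.ker_eq_bot]
    exact (EquivLike.comp_injective (fderiv ℂ f x) e).not

end ZeroSets

/-! ### Osgood's theorem -/

section Osgood

variable {E F : Type*} [NormedAddCommGroup E] [NormedSpace ℂ E] [NormedAddCommGroup F]
  [NormedSpace ℂ F] {f : E → F} {U : Set E} {z : E}

lemma fderiv_ne_zero_of_injOn_of_finrank_eq_one (hE : Module.finrank ℂ E = 1)
    (hF : Module.finrank ℂ F = 1) (hf : DifferentiableOn ℂ f U) (hU : IsOpen U) (hz : z ∈ U)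
    (hinj : InjOn f U) : fderiv ℂ f z ≠ 0 := by
  have : FiniteDimensional ℂ E := Module.finite_of_finrank_eq_succ hE
  have : FiniteDimensional ℂ F := Module.finite_of_finrank_eq_succ hF
  let a : ℂ ≃L[ℂ] E := ContinuousLinearEquiv.ofFinrankEq (by rw [hE, Module.finrank_self])
  let b : F ≃L[ℂ] ℂ := ContinuousLinearEquiv.ofFinrankEq (by rw [hF, Module.finrank_self])
  have hderiv := deriv_ne_zero_of_injOn (f := b ∘ f ∘ a) (U := a ⁻¹' U) (z := a.symm z)
    (b.differentiable.comp_differentiableOn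
      (hf.comp a.differentiable.differentiableOn (mapsTo_preimage a U)))
    (hU.preimage a.continuous) (by simpa using hz)
    (b.injective.comp_injOn (hinj.comp a.injective.injOn (mapsTo_preimage a U)))
  intro hzero
  have hfz : HasFDerivAt f (0 : E →L[ℂ] F) (a (a.symm z)) := by
    rw [a.apply_symm_apply, ← hzero]
    exact (hf.differentiableAt (hU.mem_nhds hz)).hasFDerivAt
  have hcomp := (b.hasFDerivAt.comp _ (hfz.comp _ a.hasFDerivAt)).hasDerivAt
  exact hderiv (by simpa using hcomp.deriv)

/- Otherwise the singular locus is a nonempty proper analytic subset. It contains a piece of a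
complex hypersurface, and there `f` would be locally constant. -/
lemma injective_fderiv_of_fderiv_ne_zero_imp [FiniteDimensional ℂ E] [FiniteDimensional ℂ F]
    (hEF : Module.finrank ℂ E = Module.finrank ℂ F) (hE : 1 < Module.finrank ℂ E)
    (hf : DifferentiableOn ℂ f U) (hU : IsOpen U) (hz : z ∈ U) (hinj : InjOn f U)
    (hne : ∀ x ∈ U, fderiv ℂ f x ≠ 0 → Function.Injective (fderiv ℂ f x)) :
    Function.Injective (fderiv ℂ f z) := by
  by_contra hsing
  have : Nontrivial E := Module.nontrivial_of_finrank_pos (zero_lt_one.trans hE)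
  have : CompleteSpace E := FiniteDimensional.complete ℂ E
  obtain ⟨J, hJ, hJ₀⟩ := exists_differentiableOn_eq_zero_iff_not_injective_fderiv hEF hf hU
  have hJne : ∃ᶠ x in 𝓝 z, J x ≠ 0 :=
    ((frequently_fderiv_ne_zero_of_injOn hf (hU.mem_nhds hz) hinj).and_eventually
      (hU.mem_nhds hz)).mono fun x hx hJx => (hJ₀ x).1 hJx (hne x hx.2 hx.1)
  obtain ⟨h, hh, hJh, p, hp, hJp, hhp⟩ :=
    exists_fderiv_ne_zero_of_frequently_ne_zero hJ hU hz ((hJ₀ z).2 hsing) hJne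
  have hUp := hU.mem_nhds hp
  have hlocus := eventually_eq_zero_of_fderiv_ne_zero hJ hh hUp hJp hJh hhp
  obtain ⟨W, g, hWo, hW₀, hg, hginj, hgU, hg₀, -⟩ :=
    exists_parametrization_levelSet hh hUp (hh.differentiableAt hUp).hasFDerivAt
      (Module.Dual.range_eq_top_of_ne_zero
        fun h' => hhp (ContinuousLinearMap.coe_injective h'))
  have hW := hWo.mem_nhds hW₀
  have : Nontrivial (fderiv ℂ h p).ker := by
    have hrank := Module.Dual.finrank_ker_add_one_of_ne_zero
      (fun h' => hhp (ContinuousLinearMap.coe_injective h') : (fderiv ℂ h p : E →ₗ[ℂ] ℂ) ≠ 0)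
    exact Module.nontrivial_of_finrank_pos (R := ℂ) (by omega)
  refine frequently_fderiv_ne_zero_of_injOn (hf.comp hg fun k hk => (hgU hk).1) hW
    (hinj.comp hginj fun k hk => (hgU hk).1) ?_
  filter_upwards [hW, (hg.differentiableAt hW).continuousAt.eventually
    (by rwa [hg₀])] with k hk hlocusk
  have hsingk := (hJ₀ (g k)).1 (hlocusk ((hgU hk).2.trans (hJh p hp hJp)))
  have hzero : fderiv ℂ f (g k) = 0 := not_not.1 fun h' => hsingk (hne _ (hgU hk).1 h')
  rw [fderiv_comp k (hf.differentiableAt (hU.mem_nhds (hgU hk).1))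
    (hg.differentiableAt (hWo.mem_nhds hk)), hzero, ContinuousLinearMap.zero_comp, not_not]

theorem injective_fderiv_of_injOn [FiniteDimensional ℂ E] [FiniteDimensional ℂ F]
    (hEF : Module.finrank ℂ E = Module.finrank ℂ F) (hf : DifferentiableOn ℂ f U)
    (hU : IsOpen U) (hz : z ∈ U) (hinj : InjOn f U) : Function.Injective (fderiv ℂ f z) := by
  induction hd : Module.finrank ℂ E generalizing E F with
  | zero =>
    have := Module.finrank_zero_iff.1 hd
    exact Function.injective_of_subsingleton _
  | succ d ih =>
    have hnonsing : ∀ x ∈ U, fderiv ℂ f x ≠ 0 → Function.Injective (fderiv ℂ f x) := by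
      intro x hx hne
      obtain ⟨u, hu⟩ := DFunLike.ne_iff.1 hne
      obtain ⟨ℓ, hℓu⟩ := SeparatingDual.exists_ne_zero (R := ℂ) hu
      have hℓf : ℓ ∘L fderiv ℂ f x ≠ 0 := fun h => hℓu (DFunLike.congr_fun h u)
      have hℓ : ℓ ≠ 0 := fun h => hℓf (by rw [h, ContinuousLinearMap.zero_comp])
      have : CompleteSpace E := FiniteDimensional.complete ℂ E
      obtain ⟨W, G, hWo, hW₀, hG, hGinj, hG'⟩ := exists_injOn_slice hf (hU.mem_nhds hx) hinj hℓf
      have hdim := Module.Dual.finrank_ker_add_one_of_ne_zero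
        (fun h => hℓf (ContinuousLinearMap.coe_injective h) :
          (ℓ ∘L fderiv ℂ f x : E →ₗ[ℂ] ℂ) ≠ 0)
      have hdim' := Module.Dual.finrank_ker_add_one_of_ne_zero
        (fun h => hℓ (ContinuousLinearMap.coe_injective h) : (ℓ : F →ₗ[ℂ] ℂ) ≠ 0)
      have hGz : Function.Injective (fderiv ℂ G 0) :=
        ih (by omega) hG hWo hW₀ hGinj (by omega)
      refine (injective_iff_map_eq_zero _).2 fun w hw => ?_
      have hwker : w ∈ (ℓ ∘L fderiv ℂ f x).ker := by simp [hw]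
      have hGw : fderiv ℂ G 0 ⟨w, hwker⟩ = 0 := Subtype.ext ((hG' _).trans hw)
      exact congrArg Subtype.val ((map_eq_zero_iff _ hGz).1 hGw)
    rcases Nat.eq_zero_or_pos d with rfl | hd₀
    · exact hnonsing z hz
        (fderiv_ne_zero_of_injOn_of_finrank_eq_one hd (hEF ▸ hd) hf hU hz hinj)
    · exact injective_fderiv_of_fderiv_ne_zero_imp hEF (by omega) hf hU hz hinj hnonsing

end Osgood

section HolomorphicInverse

variable {E F : Type*} [NormedAddCommGroup E] [NormedSpace ℂ E] [FiniteDimensional ℂ E]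
  [NormedAddCommGroup F] [NormedSpace ℂ F] [FiniteDimensional ℂ F] {f : E → F} {U : Set E}

theorem exists_hasFDerivAt_invFunOn (hEF : Module.finrank ℂ E = Module.finrank ℂ F)
    (hf : DifferentiableOn ℂ f U) (hU : IsOpen U) (hinj : InjOn f U) {z : E} (hz : z ∈ U) :
    ∃ f' : E ≃L[ℂ] F, (f' : E →L[ℂ] F) = fderiv ℂ f z ∧
      HasFDerivAt (Function.invFunOn f U) (f'.symm : F →L[ℂ] E) (f z) := by
  have : CompleteSpace E := FiniteDimensional.complete ℂ E
  let f' : E ≃L[ℂ] F := (LinearMap.linearEquivOfInjective (fderiv ℂ f z : E →ₗ[ℂ] F)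
    (injective_fderiv_of_injOn hEF hf hU hz hinj) hEF).toContinuousLinearEquiv
  have hf' : (f' : E →L[ℂ] F) = fderiv ℂ f z := rfl
  refine ⟨f', hf', HasStrictFDerivAt.hasFDerivAt (HasStrictFDerivAt.to_local_left_inverse ?_ ?_)⟩
  · rw [hf']
    exact hasStrictFDerivAt_of_differentiableOn hf (hU.mem_nhds hz)
  · filter_upwards [hU.mem_nhds hz] with x hx using hinj.leftInvOn_invFunOn hx

lemma differentiableOn_invFunOn_image (hEF : Module.finrank ℂ E = Module.finrank ℂ F)
    (hf : DifferentiableOn ℂ f U) (hU : IsOpen U) (hinj : InjOn f U) :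
    DifferentiableOn ℂ (Function.invFunOn f U) (f '' U) := by
  rintro _ ⟨z, hz, rfl⟩
  obtain ⟨f', -, hf'⟩ := exists_hasFDerivAt_invFunOn hEF hf hU hinj hz
  exact hf'.differentiableAt.differentiableWithinAt

end HolomorphicInverse

/-! ### Contraction and comparison of the invariant metrics -/

section InvariantMetrics

variable {m : ℕ} {Ω : Set (Cn n)} {D : Set (Cn m)} {z X : Cn n} {w Y : Cn m} {R c : ℝ}

lemma exists_disc_ball {E : Type*} [NormedAddCommGroup E] [NormedSpace ℂ E] (hR : 0 < R)
    (x v : E) : ∃ φ : ℂ → E, DifferentiableOn ℂ φ (ball 0 1) ∧ MapsTo φ (ball 0 1) (ball x R) ∧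
      φ 0 = x ∧ ((‖v‖ / R : ℝ) : ℂ) • deriv φ 0 = v := by
  have hderiv : ∀ t : ℂ, HasDerivAt (fun ζ : ℂ => x + ζ • ((R / ‖v‖ : ℝ) : ℂ) • v)
      (((R / ‖v‖ : ℝ) : ℂ) • v) t := fun t => by
    simpa using ((hasDerivAt_id t).smul_const (((R / ‖v‖ : ℝ) : ℂ) • v)).const_add x
  refine ⟨_, fun t _ => (hderiv t).differentiableAt.differentiableWithinAt, fun t ht => ?_,
    by simp, ?_⟩
  · rw [mem_ball_zero_iff] at ht
    rw [mem_ball, dist_eq_norm, add_sub_cancel_left, norm_smul, norm_smul, Complex.norm_real,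
      Real.norm_of_nonneg (by positivity)]
    calc ‖t‖ * (R / ‖v‖ * ‖v‖) ≤ ‖t‖ * R := by
          gcongr
          rw [div_mul_comm]
          exact mul_le_of_le_one_left hR.le (div_self_le_one _)
      _ < R := mul_lt_of_lt_one_left hR ht
  · rw [(hderiv 0).deriv]
    rcases eq_or_ne v 0 with rfl | hv
    · simp
    · rw [smul_smul, ← Complex.ofReal_mul, div_mul_div_cancel₀ hR.ne',
        div_self (norm_ne_zero_iff.2 hv), Complex.ofReal_one, one_smul]

lemma kobayashi_le {α : ℂ} {φ : ℂ → Cn n} (hφ : DifferentiableOn ℂ φ (ball 0 1))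
    (hφΩ : MapsTo φ (ball 0 1) Ω) (hφ₀ : φ 0 = z) (hX : α • deriv φ 0 = X) :
    kobayashi Ω z X ≤ ‖α‖ :=
  csInf_le ⟨0, by rintro _ ⟨α, -, -, -, -, -, rfl⟩; exact norm_nonneg α⟩
    ⟨α, φ, hφ, hφΩ, hφ₀, hX, rfl⟩

lemma le_kobayashi (hΩ : Ω ∈ 𝓝 z)
    (h : ∀ (α : ℂ) (φ : ℂ → Cn n), DifferentiableOn ℂ φ (ball 0 1) → MapsTo φ (ball 0 1) Ω →
      φ 0 = z → α • deriv φ 0 = X → c ≤ ‖α‖) : c ≤ kobayashi Ω z X := by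
  obtain ⟨R, hR, hRΩ⟩ := Metric.mem_nhds_iff.1 hΩ
  obtain ⟨φ, hφ, hφR, hφ₀, hφX⟩ := exists_disc_ball hR z X
  refine le_csInf ⟨_, _, φ, hφ, hφR.mono_right hRΩ, hφ₀, hφX, rfl⟩ ?_
  rintro _ ⟨α, φ, hφ, hφΩ, hφ₀, hφX, rfl⟩
  exact h α φ hφ hφΩ hφ₀ hφX

lemma kobayashi_ball_le (hR : 0 < R) : kobayashi (ball z R) z X ≤ ‖X‖ / R := by
  obtain ⟨φ, hφ, hφR, hφ₀, hφX⟩ := exists_disc_ball hR z X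
  refine (kobayashi_le hφ hφR hφ₀ hφX).trans_eq ?_
  rw [Complex.norm_real, Real.norm_of_nonneg (by positivity)]

theorem kobayashi_map_le {g : Cn m → Cn n} (hg : DifferentiableOn ℂ g D) (hD : D ∈ 𝓝 w)
    (hgD : MapsTo g D Ω) : kobayashi Ω (g w) (fderiv ℂ g w Y) ≤ kobayashi D w Y := by
  refine le_kobayashi hD fun α φ hφ hφD hφ₀ hφY => ?_
  have hgw : HasFDerivAt g (fderiv ℂ g w) (φ 0) := by
    rw [hφ₀]
    exact (hg.differentiableAt hD).hasFDerivAt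
  have hφ' := (hφ.differentiableAt (ball_mem_nhds 0 one_pos)).hasDerivAt
  refine kobayashi_le (hg.comp hφ hφD) (hgD.comp hφD) (congrArg g hφ₀) ?_
  rw [(hgw.comp_hasDerivAt 0 hφ').deriv, ← map_smul, hφY]

lemma norm_fderiv_le_kobayashi {f : Cn n → ℂ} (hΩ : Ω ∈ 𝓝 z) (hf : DifferentiableOn ℂ f Ω)
    (hfΩ : MapsTo f Ω (ball 0 1)) : ‖fderiv ℂ f z X‖ ≤ kobayashi Ω z X := by
  refine le_kobayashi hΩ fun α φ hφ hφΩ hφ₀ hφX => ?_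
  have hfz : HasFDerivAt f (fderiv ℂ f z) (φ 0) := by
    rw [hφ₀]
    exact (hf.differentiableAt hΩ).hasFDerivAt
  have hφ' := (hφ.differentiableAt (ball_mem_nhds 0 one_pos)).hasDerivAt
  have hschwarz : ‖deriv (f ∘ φ) 0‖ ≤ 1 := by
    rw [norm_deriv_eq_norm_fderiv]
    simpa using norm_fderiv_le_of_norm_le_on_ball (hf.comp hφ hφΩ) one_pos fun t ht =>
      (mem_ball_zero_iff.1 (hfΩ (hφΩ ht))).le
  calc ‖fderiv ℂ f z X‖ = ‖α‖ * ‖deriv (f ∘ φ) 0‖ := by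
        rw [(hfz.comp_hasDerivAt 0 hφ').deriv, ← norm_smul, ← map_smul, hφX]
    _ ≤ ‖α‖ := mul_le_of_le_one_right (norm_nonneg α) hschwarz

lemma norm_fderiv_le_caratheodory {f : Cn n → ℂ} (hΩ : Ω ∈ 𝓝 z) (hf : DifferentiableOn ℂ f Ω)
    (hfΩ : MapsTo f Ω (ball 0 1)) : ‖fderiv ℂ f z X‖ ≤ caratheodory Ω z X := by
  refine le_csSup ⟨kobayashi Ω z X, ?_⟩ ⟨f, hf, hfΩ, rfl⟩
  rintro _ ⟨f, hf, hfΩ, rfl⟩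
  exact norm_fderiv_le_kobayashi hΩ hf hfΩ

lemma caratheodory_le (h : ∀ f : Cn n → ℂ, DifferentiableOn ℂ f Ω → MapsTo f Ω (ball 0 1) →
    ‖fderiv ℂ f z X‖ ≤ c) : caratheodory Ω z X ≤ c := by
  refine csSup_le ⟨_, 0, differentiableOn_const 0, fun _ _ => mem_ball_self one_pos, rfl⟩ ?_
  rintro _ ⟨f, hf, hfΩ, rfl⟩
  exact h f hf hfΩ

theorem caratheodory_le_kobayashi (hΩ : Ω ∈ 𝓝 z) : caratheodory Ω z X ≤ kobayashi Ω z X :=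
  caratheodory_le fun _ => norm_fderiv_le_kobayashi hΩ

theorem caratheodory_map_le {g : Cn m → Cn n} (hg : DifferentiableOn ℂ g D) (hD : D ∈ 𝓝 w)
    (hgD : MapsTo g D Ω) (hΩ : Ω ∈ 𝓝 (g w)) :
    caratheodory Ω (g w) (fderiv ℂ g w Y) ≤ caratheodory D w Y := by
  refine caratheodory_le fun f hf hfΩ => ?_
  have hfg := norm_fderiv_le_caratheodory (X := Y) hD (hf.comp hg hgD) (hfΩ.comp hgD)
  rwa [fderiv_comp w (hf.differentiableAt hΩ) (hg.differentiableAt hD)] at hfg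

lemma norm_div_le_caratheodory_ball {a : Cn n} (hz : z ∈ ball a R) :
    ‖X‖ / R ≤ caratheodory (ball a R) z X := by
  have hR : 0 < R := pos_of_mem_ball hz
  obtain ⟨ℓ, hℓ, hℓX⟩ := exists_dual_vector'' ℂ X
  set L : Cn n →L[ℂ] ℂ := ((R⁻¹ : ℝ) : ℂ) • ℓ with hL
  have hnorm (y : Cn n) : ‖L y‖ = R⁻¹ * ‖ℓ y‖ := by
    rw [hL, _root_.smul_apply, norm_smul, Complex.norm_real,
      Real.norm_of_nonneg (by positivity)]
  have hderiv (y : Cn n) : HasFDerivAt (fun y => L y - L a) L y := L.hasFDerivAt.sub_const _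
  have hmaps : MapsTo (fun y => L y - L a) (ball a R) (ball 0 1) := by
    intro y hy
    simp only [mem_ball_zero_iff, ← map_sub, hnorm, inv_mul_lt_one₀ hR]
    exact (ℓ.le_of_opNorm_le hℓ _).trans_lt (by rwa [one_mul, ← mem_ball_iff_norm])
  calc ‖X‖ / R = ‖fderiv ℂ (fun y => L y - L a) z X‖ := by
        rw [(hderiv z).fderiv, hnorm, hℓX, div_eq_inv_mul, RCLike.norm_ofReal, abs_norm]
    _ ≤ caratheodory (ball a R) z X :=
        norm_fderiv_le_caratheodory (isOpen_ball.mem_nhds hz)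
          (fun y _ => (hderiv y).differentiableAt.differentiableWithinAt) hmaps

lemma kobayashi_pos (hΩ : Ω ∈ 𝓝 z) (hbdd : Bornology.IsBounded Ω) (hX : X ≠ 0) :
    0 < kobayashi Ω z X := by
  obtain ⟨R, hΩR⟩ := hbdd.subset_ball 0
  have hzR : z ∈ ball 0 R := hΩR (mem_of_mem_nhds hΩ)
  have hid := caratheodory_map_le (Y := X) differentiableOn_id hΩ hΩR (isOpen_ball.mem_nhds hzR)
  rw [fderiv_id] at hid
  calc 0 < ‖X‖ / R := div_pos (norm_pos_iff.2 hX) (pos_of_mem_ball hzR)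
    _ ≤ caratheodory (ball 0 R) z X := norm_div_le_caratheodory_ball hzR
    _ ≤ caratheodory Ω z X := hid
    _ ≤ kobayashi Ω z X := caratheodory_le_kobayashi hΩ

theorem mul_kobayashi_le_caratheodory {f : Cn n → Cn n} (hΩ : IsOpen Ω) (hz : z ∈ Ω)
    (hf : DifferentiableOn ℂ f Ω) (hinj : InjOn f Ω) (hfΩ : MapsTo f Ω (ball 0 1)) (hfz : f z = 0)
    {r : ℝ} (hr : 0 < r) (hrf : ball 0 r ⊆ f '' Ω) :
    r * kobayashi Ω z X ≤ caratheodory Ω z X := by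
  obtain ⟨f', hf', hg'⟩ := exists_hasFDerivAt_invFunOn rfl hf hΩ hinj hz
  have hg₀ := hinj.leftInvOn_invFunOn hz
  rw [hfz] at hg' hg₀
  have hg'X : fderiv ℂ (Function.invFunOn f Ω) 0 (fderiv ℂ f z X) = X := by
    rw [hg'.fderiv, ← hf']
    exact f'.symm_apply_apply X
  have hκ : kobayashi Ω z X ≤ ‖fderiv ℂ f z X‖ / r := by
    have hgκ := kobayashi_map_le (Y := fderiv ℂ f z X)
      ((differentiableOn_invFunOn_image rfl hf hΩ hinj).mono hrf) (ball_mem_nhds 0 hr)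
      ((surjOn_image f Ω).mapsTo_invFunOn.mono_left hrf)
    rw [hg₀, hg'X] at hgκ
    exact hgκ.trans (kobayashi_ball_le hr)
  have hγ : ‖fderiv ℂ f z X‖ ≤ caratheodory Ω z X := by
    simpa only [div_one] using (norm_div_le_caratheodory_ball (hfΩ hz)).trans
      (caratheodory_map_le (Y := X) hf (hΩ.mem_nhds hz) hfΩ (isOpen_ball.mem_nhds (hfΩ hz)))
  calc r * kobayashi Ω z X ≤ ‖fderiv ℂ f z X‖ := (le_div_iff₀' hr).1 hκ
    _ ≤ caratheodory Ω z X := hγ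

end InvariantMetrics

theorem squeezing_caratheodory_kobayashi_general (n : ℕ) (Ω : Set (Cn n)) (hopen : IsOpen Ω) :
    ∀ z ∈ Ω, ∀ X : Cn n,
      (squeezing Ω z * kobayashi Ω z X ≤ caratheodory Ω z X ∧
        caratheodory Ω z X ≤ kobayashi Ω z X) ∧
      (0 < kobayashi Ω z X → squeezing Ω z ≤ caratheodory Ω z X / kobayashi Ω z X ∧
        caratheodory Ω z X / kobayashi Ω z X ≤ 1) := by
  intro z hz X
  have hγκ : caratheodory Ω z X ≤ kobayashi Ω z X := caratheodory_le_kobayashi (hopen.mem_nhds hz)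
  have hγ : 0 ≤ caratheodory Ω z X := by
    apply Real.sSup_nonneg
    rintro _ ⟨f, -, -, rfl⟩
    exact norm_nonneg _
  have hσ (hκ : 0 < kobayashi Ω z X) : squeezing Ω z ≤ caratheodory Ω z X / kobayashi Ω z X := by
    refine Real.sSup_le ?_ (div_nonneg hγ hκ.le)
    rintro r ⟨hr, f, hf, hinj, hfΩ, hfz, hrf⟩
    exact (le_div_iff₀ hκ).2 (mul_kobayashi_le_caratheodory hopen hz hf hinj hfΩ hfz hr hrf)
  refine ⟨⟨?_, hγκ⟩, fun hκ => ⟨hσ hκ, div_le_one_of_le₀ hγκ hκ.le⟩⟩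
  rcases (hγ.trans hγκ).eq_or_lt with hκ | hκ
  · rwa [← hκ, mul_zero]
  · exact (le_div_iff₀ hκ).1 (hσ hκ)

/-- For a bounded domain `Ω`, `σ_Ω·κ_Ω ≤ γ_Ω ≤ κ_Ω`; in particular
`σ_Ω ≤ γ_Ω/κ_Ω ≤ 1` for nonzero vectors. -/
theorem squeezing_caratheodory_kobayashi (n : ℕ) (Ω : Set (Cn n)) (hopen : IsOpen Ω) (hconn : IsConnected Ω)
    (hbdd : Bornology.IsBounded Ω) :
    ∀ z ∈ Ω, ∀ X : Cn n,
      (squeezing Ω z * kobayashi Ω z X ≤ caratheodory Ω z X ∧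
        caratheodory Ω z X ≤ kobayashi Ω z X) ∧
      (X ≠ 0 → squeezing Ω z ≤ caratheodory Ω z X / kobayashi Ω z X ∧
        caratheodory Ω z X / kobayashi Ω z X ≤ 1) :=
  fun z hz X => (squeezing_caratheodory_kobayashi_general n Ω hopen z hz X).imp_right
    fun h hX => h (kobayashi_pos (hopen.mem_nhds hz) hbdd hX)

end
end
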